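/- arXiv:math/0002135 — 5 statements merged into one kernel-verified Lean document; each statement's English description precedes it below -/
import Mathlib

section
/- For every n ∈ ℕ and all z, z' ∈ ℂ, one has the identity Σ_{λ ⊢ n} n! · Π_{□∈λ} (z + c(□))(z' + c(□)) / h(□)² = (zz')_n, where the sum runs over all partitions λ of n. (Equivalently, the z-measure M_n(λ) = (n!/(zz')_n) Π_{□∈λ}(z+c(□))(z'+c(□))/h(□)² satisfies Σ_{|λ|=n} M_n(λ) = 1 whenever (zz')_n ≠ 0.) -/
open scoped Classical

noncomputable section

/-- The content of a cell `c = (i, j)` (0-indexed row `i` and column `j`) of a Young diagram: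
`c(□) = column(□) - row(□)`. -/
def cellContent (c : ℕ × ℕ) : ℤ := (c.2 : ℤ) - (c.1 : ℤ)

/-- The hook length of the cell `c = (i, j)` of the Young diagram `Y`:
`h(□) = λ_i - j + λ'_j - i - 1` in 0-indexed coordinates. -/
def hookLen (Y : YoungDiagram) (c : ℕ × ℕ) : ℕ :=
  (Y.rowLen c.1 - c.2) + (Y.colLen c.2 - c.1) - 1

/-- The product `Π_{□ ∈ λ} (z + c(□)) (z' + c(□)) / h(□)²`. -/
def zWeight (z z' : ℂ) (Y : YoungDiagram) : ℂ :=
  ∏ c ∈ Y.cells, ((z + cellContent c) * (z' + cellContent c) / (hookLen Y c : ℂ) ^ 2)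

/-- The finset of squares addable to the Young diagram `Y`: cells `c ∉ Y` such that
adding `c` to `Y` again yields a Young diagram, i.e. every strictly smaller cell
(in the product order) already belongs to `Y`.  Any such cell has the form
`(i, Y.rowLen i)` for some `i ≤ Y.colLen 0`. -/
def addables (Y : YoungDiagram) : Finset (ℕ × ℕ) :=
  ((Finset.range (Y.colLen 0 + 1)).image fun i => (i, Y.rowLen i)).filter
    fun c => ∀ d : ℕ × ℕ, d ≤ c → d ≠ c → d ∈ Y.cells

/-- Add a square to a Young diagram (when the result is again a Young diagram;
junk value `Y` otherwise). -/
def addBox (Y : YoungDiagram) (c : ℕ × ℕ) : YoungDiagram :=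
  if h : c ∉ Y.cells ∧ ∀ d : ℕ × ℕ, d ≤ c → d ≠ c → d ∈ Y.cells then
    { cells := insert c Y.cells,
      isLowerSet := by
        intro a b hba ha
        simp only [Finset.coe_insert, Set.mem_insert_iff, Finset.mem_coe] at ha ⊢
        rcases ha with rfl | ha
        · by_cases hbc : b = a
          · exact Or.inl hbc
          · exact Or.inr (h.2 b hba hbc)
        · exact Or.inr (Y.isLowerSet hba ha) }
  else Y

/-- The finset of squares removable from the Young diagram `Y`: the corners of `Y`. -/
def removables (Y : YoungDiagram) : Finset (ℕ × ℕ) :=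
  Y.cells.filter fun c => (c.1 + 1, c.2) ∉ Y.cells ∧ (c.1, c.2 + 1) ∉ Y.cells

/-- Remove a square from a Young diagram (when the result is again a Young diagram;
junk value `Y` otherwise). -/
def removeBox (Y : YoungDiagram) (c : ℕ × ℕ) : YoungDiagram :=
  if h : (c.1 + 1, c.2) ∉ Y.cells ∧ (c.1, c.2 + 1) ∉ Y.cells then
    { cells := Y.cells.erase c,
      isLowerSet := by
        intro a b hba ha
        rw [Finset.coe_erase, Set.mem_diff] at ha ⊢
        refine ⟨Y.isLowerSet hba ha.1, ?_⟩
        rintro rfl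
        rcases lt_or_eq_of_le hba with hlt | rfl
        · rcases Prod.lt_iff.mp hlt with ⟨h1, h2⟩ | ⟨h1, h2⟩
          · exact h.1 (Y.isLowerSet (Prod.mk_le_mk.mpr ⟨h1, h2⟩) ha.1)
          · exact h.2 (Y.isLowerSet (Prod.mk_le_mk.mpr ⟨h1, h2⟩) ha.1)
        · exact ha.2 rfl }
  else Y

end

namespace ZM

open Finset

/-! ### Partial fraction identities -/

/-- The residue coefficient. -/
noncomputable def acoef (s : Finset ℕ) (x : ℕ → ℂ) (i : ℕ) : ℂ :=
  ∏ j ∈ s.erase i, (1 + 1 / (x i - x j))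

lemma acoef_insert_of_mem {s : Finset ℕ} {x : ℕ → ℂ} {y i : ℕ} (hy : y ∉ s) (hi : i ∈ s) :
    acoef (insert y s) x i = acoef s x i * (1 + 1 / (x i - x y)) := by
  unfold acoef
  have hne : y ≠ i := fun h => hy (h ▸ hi)
  rw [Finset.erase_insert_of_ne hne, Finset.prod_insert (by simp [hy]), mul_comm]

lemma acoef_insert_self {s : Finset ℕ} {x : ℕ → ℂ} {y : ℕ} (hy : y ∉ s) :
    acoef (insert y s) x y = ∏ j ∈ s, (1 + 1 / (x y - x j)) := by
  unfold acoef
  rw [Finset.erase_insert hy]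

lemma parfrac (x : ℕ → ℂ) (s : Finset ℕ) (hx : Set.InjOn x s) (t : ℂ) (ht : ∀ i ∈ s, t ≠ x i) :
    ∏ j ∈ s, (1 + 1 / (t - x j)) = 1 + ∑ i ∈ s, acoef s x i / (t - x i) := by
  induction s using Finset.induction_on generalizing t with
  | empty => simp
  | insert y s hy ih =>
    have hxs : Set.InjOn x s := hx.mono (by simp)
    have hyx : ∀ i ∈ s, x y ≠ x i := fun i hi h =>
      hy ((hx (by simp) (by simp [hi]) h) ▸ hi)
    rw [Finset.prod_insert hy, Finset.sum_insert hy, acoef_insert_self hy,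
      ih hxs (x y) hyx, ih hxs t (fun i hi => ht i (by simp [hi]))]
    have hty : t - x y ≠ 0 := sub_ne_zero.mpr (ht y (by simp))
    have key : ∑ i ∈ s, acoef (insert y s) x i / (t - x i)
        = (1 + 1 / (t - x y)) * ∑ i ∈ s, acoef s x i / (t - x i)
          - (∑ i ∈ s, acoef s x i / (x y - x i)) / (t - x y) := by
      rw [Finset.mul_sum, Finset.sum_div, ← Finset.sum_sub_distrib]
      refine Finset.sum_congr rfl fun i hi => ?_
      have h1 : t - x i ≠ 0 := sub_ne_zero.mpr (ht i (by simp [hi]))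
      have h2 : x y - x i ≠ 0 := sub_ne_zero.mpr (hyx i hi)
      have h3 : x i - x y ≠ 0 := sub_ne_zero.mpr (hyx i hi).symm
      have h4 : x i - x y = -(x y - x i) := by ring
      rw [acoef_insert_of_mem hy hi, h4]
      field_simp
      ring
    rw [key]
    ring

lemma sum_acoef (x : ℕ → ℂ) (s : Finset ℕ) (hx : Set.InjOn x s) :
    ∑ i ∈ s, acoef s x i = s.card := by
  induction s using Finset.induction_on with
  | empty => simp
  | insert y s hy ih =>
    have hxs : Set.InjOn x s := hx.mono (by simp)
    have hyx : ∀ i ∈ s, x y ≠ x i := fun i hi h =>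
      hy ((hx (by simp) (by simp [hi]) h) ▸ hi)
    rw [Finset.sum_insert hy, acoef_insert_self hy, parfrac x s hxs (x y) hyx,
      Finset.card_insert_of_notMem hy, add_assoc, ← Finset.sum_add_distrib]
    push_cast
    rw [← ih hxs, add_comm]
    congr 1
    refine Finset.sum_congr rfl fun i hi => ?_
    have h4 : x i - x y = -(x y - x i) := by ring
    rw [acoef_insert_of_mem hy hi, h4, div_neg]
    ring

lemma sum_acoef_mul (x : ℕ → ℂ) (s : Finset ℕ) (hx : Set.InjOn x s) :
    ∑ i ∈ s, acoef s x i * x i = ∑ i ∈ s, x i + (s.card : ℂ) * (s.card - 1) / 2 := by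
  induction s using Finset.induction_on with
  | empty => simp
  | insert y s hy ih =>
    have hxs : Set.InjOn x s := hx.mono (by simp)
    have hyx : ∀ i ∈ s, x y ≠ x i := fun i hi h =>
      hy ((hx (by simp) (by simp [hi]) h) ▸ hi)
    rw [Finset.sum_insert hy, acoef_insert_self hy, parfrac x s hxs (x y) hyx,
      Finset.card_insert_of_notMem hy, Finset.sum_insert hy]
    have key : ∑ i ∈ s, acoef (insert y s) x i * x i
        = ∑ i ∈ s, acoef s x i * x i + ∑ i ∈ s, acoef s x i
          - (∑ i ∈ s, acoef s x i / (x y - x i)) * x y := by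
      rw [Finset.sum_mul, ← Finset.sum_add_distrib, ← Finset.sum_sub_distrib]
      refine Finset.sum_congr rfl fun i hi => ?_
      have h2 : x y - x i ≠ 0 := sub_ne_zero.mpr (hyx i hi)
      have h4 : x i - x y = -(x y - x i) := by ring
      rw [acoef_insert_of_mem hy hi, h4]
      field_simp
      ring
    rw [key, ih hxs, sum_acoef x s hxs]
    push_cast
    ring

lemma sum_up (x : ℕ → ℂ) (N : ℕ) (hx : Set.InjOn x (range N)) (h0 : ∃ i ∈ range N, x i = 0)
    (hpos : ∀ i ∈ range N, x i + 1 ≠ 0) (m z z' : ℂ)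
    (hm : ∑ i ∈ range N, x i = m + (N : ℂ) * (N - 1) / 2) :
    ∑ i ∈ range N, (z + (x i - N + 1)) * (z' + (x i - N + 1)) * (acoef (range N) x i / (x i + 1))
      = z * z' + m := by
  have h1 := sum_acoef x _ hx
  have h2 := sum_acoef_mul x _ hx
  have h3 := parfrac x (range N) hx (-1) (fun i hi h => hpos i hi (by rw [← h]; ring))
  obtain ⟨k, hk, hk0⟩ := h0
  rw [Finset.prod_eq_zero hk (by rw [hk0]; norm_num)] at h3
  have h4 : ∑ i ∈ range N, acoef (range N) x i / (x i + 1) = 1 := by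
    have : ∑ i ∈ range N, acoef (range N) x i / (x i + 1)
        = - ∑ i ∈ range N, acoef (range N) x i / (-1 - x i) := by
      rw [← Finset.sum_neg_distrib]
      refine Finset.sum_congr rfl fun i _ => ?_
      rw [show -1 - x i = -(x i + 1) by ring, div_neg, neg_neg]
    rw [this]
    linear_combination h3
  have key : ∀ i ∈ range N,
      (z + (x i - N + 1)) * (z' + (x i - N + 1)) * (acoef (range N) x i / (x i + 1))
      = acoef (range N) x i * x i + (1 + z + z' - 2 * N) * acoef (range N) x i
        + (z - N) * (z' - N) * (acoef (range N) x i / (x i + 1)) := by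
    intro i hi
    have := hpos i hi
    field_simp
    ring
  rw [Finset.sum_congr rfl key, Finset.sum_add_distrib, Finset.sum_add_distrib, ← Finset.mul_sum,
    ← Finset.mul_sum, h1, h2, h4, hm, Finset.card_range]
  ring

lemma sum_down (x : ℕ → ℂ) (N : ℕ) (hx : Set.InjOn x (range N)) (m : ℂ)
    (hm : ∑ i ∈ range N, x i = m + (N : ℂ) * (N - 1) / 2) :
    ∑ i ∈ range N, x i * acoef (range N) (fun j => - x j) i = m := by
  have h2 := sum_acoef_mul (fun j => - x j) (range N) (fun a ha b hb h => hx ha hb (neg_injective h))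
  rw [Finset.sum_neg_distrib, hm, Finset.card_range] at h2
  have : ∑ i ∈ range N, x i * acoef (range N) (fun j => - x j) i =
      - ∑ i ∈ range N, acoef (range N) (fun j => - x j) i * (- x i) := by
    rw [← Finset.sum_neg_distrib]
    exact Finset.sum_congr rfl fun i _ => by ring
  rw [this, h2]
  ring

/-! ### Vandermonde products -/

/-- Vandermonde product. -/
noncomputable def vand (N : ℕ) (x : ℕ → ℂ) : ℂ := ∏ k ∈ range N, ∏ i ∈ range k, (x i - x k)

lemma vand_congr {N : ℕ} {x y : ℕ → ℂ} (h : ∀ i < N, x i = y i) : vand N x = vand N y := by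
  unfold vand
  refine Finset.prod_congr rfl fun k hk => Finset.prod_congr rfl fun i hi => ?_
  simp only [Finset.mem_range] at hk hi
  rw [h i (by omega), h k hk]

lemma vand_step (N : ℕ) (x y : ℕ → ℂ) (i : ℕ) (hi : i < N) (hy : ∀ k, k ≠ i → y k = x k)
    (hyi : y i = x i + 1) :
    vand N y * ∏ j ∈ (range N).erase i, (x i - x j)
      = vand N x * ∏ j ∈ (range N).erase i, (x i + 1 - x j) := by
  induction N with
  | zero => omega
  | succ N ih =>
    have hv : ∀ x, vand (N + 1) x = vand N x * ∏ j ∈ range N, (x j - x N) := fun x => by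
      unfold vand; rw [Finset.prod_range_succ]
    rw [hv, hv, Finset.range_add_one]
    rcases Nat.lt_succ_iff_lt_or_eq.mp hi with h | rfl
    · have hne : N ≠ i := by omega
      rw [Finset.erase_insert_of_ne hne, Finset.prod_insert (by simp), Finset.prod_insert (by simp)]
      have hm : i ∈ range N := by simpa using h
      rw [← Finset.mul_prod_erase _ _ hm, ← Finset.mul_prod_erase _ (fun j => x j - x N) hm,
        hyi, hy N hne]
      rw [Finset.prod_congr rfl (fun j hj => by rw [hy j (Finset.ne_of_mem_erase hj)] :
        ∀ j ∈ (range N).erase i, y j - x N = x j - x N)]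
      linear_combination (x i + 1 - x N) * (x i - x N) *
        (∏ j ∈ (range N).erase i, (x j - x N)) * ih h
    · rw [Finset.erase_insert (by simp), vand_congr (fun k hk => hy k (by omega)), mul_assoc,
        mul_assoc, ← Finset.prod_mul_distrib, ← Finset.prod_mul_distrib]
      congr 1
      refine Finset.prod_congr rfl fun j hj => ?_
      rw [hyi, hy j (by simp at hj; omega)]
      ring

/-! ### Young diagrams -/

lemma eq_of_rowLen {Y Z : YoungDiagram} (h : ∀ k, Y.rowLen k = Z.rowLen k) : Y = Z := by
  ext ⟨i, j⟩
  rw [YoungDiagram.mem_cells, YoungDiagram.mem_cells, YoungDiagram.mem_iff_lt_rowLen,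
    YoungDiagram.mem_iff_lt_rowLen, h]

/-- Young diagram from a row length function. -/
def ofFun (f : ℕ → ℕ) (hf : Antitone f) (N : ℕ) : YoungDiagram where
  cells := (range N ×ˢ range (f 0)).filter fun c => c.2 < f c.1
  isLowerSet := by
    rintro ⟨a, b⟩ ⟨c, d⟩ hle h
    simp only [Finset.coe_filter, Finset.mem_product, Finset.mem_range, Set.mem_ofPred_eq,
      Prod.mk_le_mk] at *
    have := hf hle.1
    omega

lemma rowLen_ofFun (f : ℕ → ℕ) (hf : Antitone f) (N : ℕ) (hN : ∀ k, N ≤ k → f k = 0) (k : ℕ) :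
    (ofFun f hf N).rowLen k = f k := by
  have h : ∀ j, j < (ofFun f hf N).rowLen k ↔ j < f k := by
    intro j
    rw [← YoungDiagram.mem_iff_lt_rowLen, ← YoungDiagram.mem_cells]
    simp only [ofFun, Finset.mem_filter, Finset.mem_product, Finset.mem_range]
    have h1 := hf (Nat.zero_le k)
    have h2 := hN k
    by_cases hk : N ≤ k
    · have := h2 hk; omega
    · omega
  have h1 := h (f k)
  have h2 := h ((ofFun f hf N).rowLen k)
  omega

lemma rowLen_zero_of_le {Y : YoungDiagram} {k : ℕ} (h : Y.card ≤ k) : Y.rowLen k = 0 := by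
  by_contra hne
  have hsub : (range (k + 1)).image (fun i => ((i, 0) : ℕ × ℕ)) ⊆ Y.cells := by
    intro c hc
    simp only [Finset.mem_image, Finset.mem_range] at hc
    obtain ⟨i, hi, rfl⟩ := hc
    rw [YoungDiagram.mem_cells, YoungDiagram.mem_iff_lt_rowLen]
    have := Y.rowLen_anti i k (by omega)
    omega
  have := Finset.card_le_card hsub
  rw [Finset.card_image_of_injective _ (fun a b h => by simpa using h), Finset.card_range] at this
  have h2 : Y.cells.card = Y.card := rfl
  omega

lemma prod_cells {M : Type*} [CommMonoid M] (Y : YoungDiagram) (N : ℕ)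
    (hN : ∀ k, N ≤ k → Y.rowLen k = 0) (g : ℕ × ℕ → M) :
    ∏ c ∈ Y.cells, g c = ∏ i ∈ range N, ∏ j ∈ range (Y.rowLen i), g (i, j) := by
  rw [Finset.prod_sigma']
  symm
  refine Finset.prod_bij (fun a _ => (a.1, a.2)) ?_ ?_ ?_ ?_
  · rintro ⟨i, j⟩ h
    simp only [Finset.mem_sigma, Finset.mem_range] at h
    rw [YoungDiagram.mem_cells, YoungDiagram.mem_iff_lt_rowLen]
    exact h.2
  · rintro ⟨i, j⟩ _ ⟨i', j'⟩ _ h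
    simp only [Prod.mk.injEq] at h
    obtain ⟨rfl, rfl⟩ := h
    rfl
  · rintro ⟨i, j⟩ h
    rw [YoungDiagram.mem_cells, YoungDiagram.mem_iff_lt_rowLen] at h
    refine ⟨⟨i, j⟩, ?_, rfl⟩
    simp only [Finset.mem_sigma, Finset.mem_range]
    refine ⟨?_, h⟩
    by_contra hc
    have := hN i (by omega)
    omega
  · rintro ⟨i, j⟩ _
    rfl

lemma card_eq_sum (Y : YoungDiagram) (N : ℕ) (hN : ∀ k, N ≤ k → Y.rowLen k = 0) :
    Y.card = ∑ i ∈ range N, Y.rowLen i := by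
  have := prod_cells Y N hN (fun _ => Multiplicative.ofAdd (1 : ℕ))
  simp only [← ofAdd_sum, Finset.sum_const, Finset.card_range, smul_eq_mul, mul_one] at this
  exact this

/-- Shifted row lengths. -/
def sh (N : ℕ) (Y : YoungDiagram) (i : ℕ) : ℕ := Y.rowLen i + (N - 1 - i)

lemma sh_lt {N : ℕ} {Y : YoungDiagram} {i k : ℕ} (h : i < k) (hk : k < N) :
    sh N Y k < sh N Y i := by
  unfold sh
  have := Y.rowLen_anti i k h.le
  omega

lemma fact_aux (n : ℕ) : ∏ v ∈ Icc 1 n, v = n.factorial := by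
  induction n with
  | zero => simp
  | succ n ih => rw [Finset.prod_Icc_succ_top (by omega), ih, Nat.factorial_succ, mul_comm]

lemma row_hook (Y : YoungDiagram) (N : ℕ) (i : ℕ) (hi : i < N)
    (hN : ∀ k, N ≤ k → Y.rowLen k = 0) :
    (∏ j ∈ range (Y.rowLen i), hookLen Y (i, j)) *
      (∏ k ∈ Ioo i N, (sh N Y i - sh N Y k)) = (sh N Y i).factorial := by
  have hij : ∀ a b, b < Y.rowLen a ↔ a < Y.colLen b := fun a b => by
    rw [← YoungDiagram.mem_iff_lt_rowLen, YoungDiagram.mem_iff_lt_colLen]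
  have inj1 : Set.InjOn (fun j => hookLen Y (i, j)) (range (Y.rowLen i)) := by
    have aux : ∀ a b, b < Y.rowLen i → a < b → hookLen Y (i, b) < hookLen Y (i, a) := by
      intro a b hb hab
      have h1 := Y.colLen_anti a b hab.le
      have h2 := (hij i b).1 hb
      simp only [hookLen]
      omega
    intro a ha b hb h
    simp only [Finset.coe_range, Set.mem_Iio] at ha hb
    rcases lt_trichotomy a b with h1 | h1 | h1
    · have := aux a b hb h1; simp only at h; omega
    · exact h1
    · have := aux b a ha h1; simp only at h; omega
  have inj2 : Set.InjOn (fun k => sh N Y i - sh N Y k) (Ioo i N) := by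
    intro a ha b hb h
    simp only [Finset.coe_Ioo, Set.mem_Ioo] at ha hb
    have ha' := sh_lt (Y := Y) ha.1 ha.2
    have hb' := sh_lt (Y := Y) hb.1 hb.2
    simp only at h
    rcases lt_trichotomy a b with h1 | h1 | h1
    · have := sh_lt (Y := Y) h1 hb.2; omega
    · exact h1
    · have := sh_lt (Y := Y) h1 ha.2; omega
  have disj : Disjoint ((range (Y.rowLen i)).image (fun j => hookLen Y (i, j)))
      ((Ioo i N).image (fun k => sh N Y i - sh N Y k)) := by
    rw [Finset.disjoint_left]
    intro v hv hv'
    simp only [Finset.mem_image, Finset.mem_range, Finset.mem_Ioo] at hv hv'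
    obtain ⟨j, hj, rfl⟩ := hv
    obtain ⟨k, hk, he⟩ := hv'
    have h1 := (hij i j).1 hj
    have h2 := hij k j
    have h3 := Y.rowLen_anti i k hk.1.le
    simp only [hookLen, sh] at he
    by_cases hc : j < Y.rowLen k
    · have := h2.1 hc; omega
    · have : ¬ k < Y.colLen j := fun h => hc (h2.2 h)
      omega
  have hunion : (range (Y.rowLen i)).image (fun j => hookLen Y (i, j)) ∪
      (Ioo i N).image (fun k => sh N Y i - sh N Y k) = Icc 1 (sh N Y i) := by
    apply Finset.eq_of_subset_of_card_le
    · intro v hv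
      simp only [Finset.mem_union, Finset.mem_image, Finset.mem_range, Finset.mem_Ioo] at hv
      rw [Finset.mem_Icc]
      rcases hv with ⟨j, hj, rfl⟩ | ⟨k, hk, rfl⟩
      · have h1 := (hij i j).1 hj
        have h2 : Y.colLen j ≤ N := by
          by_contra hc
          have := (hij N j).2 (by omega)
          have := hN N le_rfl
          omega
        simp only [hookLen, sh]
        omega
      · have := sh_lt (Y := Y) hk.1 hk.2
        omega
    · rw [Finset.card_union_of_disjoint disj, Finset.card_image_of_injOn inj1,
        Finset.card_image_of_injOn inj2]
      simp only [Finset.card_range, Nat.card_Ioo, Nat.card_Icc, sh]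
      omega
  rw [← Finset.prod_image (f := fun v => v) inj1, ← Finset.prod_image (f := fun v => v) inj2,
    ← Finset.prod_union disj, hunion, fact_aux]

/-- Shifted row lengths, complex valued. -/
noncomputable def cx (N : ℕ) (Y : YoungDiagram) (i : ℕ) : ℂ := (sh N Y i : ℂ)

/-- Hook product. -/
noncomputable def hp (Y : YoungDiagram) : ℂ := ∏ c ∈ Y.cells, (hookLen Y c : ℂ)

lemma hp_vand (Y : YoungDiagram) (N : ℕ) (hN : ∀ k, N ≤ k → Y.rowLen k = 0) :
    hp Y * vand N (cx N Y) = ∏ i ∈ range N, ((sh N Y i).factorial : ℂ) := by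
  have hv : vand N (cx N Y) = ∏ i ∈ range N, ∏ k ∈ Ioo i N, (cx N Y i - cx N Y k) := by
    unfold vand
    refine Finset.prod_comm' fun a b => ?_
    simp only [Finset.mem_range, Finset.mem_Ioo]
    omega
  rw [hv, hp, prod_cells Y N hN, ← Finset.prod_mul_distrib]
  refine Finset.prod_congr rfl fun i hi => ?_
  rw [← row_hook Y N i (Finset.mem_range.mp hi) hN]
  push_cast
  congr 1
  refine Finset.prod_congr rfl fun k hk => ?_
  rw [Finset.mem_Ioo] at hk
  rw [Nat.cast_sub (sh_lt hk.1 hk.2).le]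
  rfl

lemma hp_ne_zero (Y : YoungDiagram) : hp Y ≠ 0 := by
  have h := hp_vand Y Y.card (fun k hk => rowLen_zero_of_le hk)
  have h2 : ∏ i ∈ range Y.card, ((sh Y.card Y i).factorial : ℂ) ≠ 0 :=
    Finset.prod_ne_zero_iff.mpr fun i _ => by exact_mod_cast Nat.factorial_ne_zero _
  intro h0
  rw [h0, zero_mul] at h
  exact h2 h.symm

lemma cx_inj (N : ℕ) (Y : YoungDiagram) : Set.InjOn (cx N Y) (range N) := by
  intro a ha b hb h
  simp only [Finset.coe_range, Set.mem_Iio] at ha hb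
  have h' : sh N Y a = sh N Y b := by unfold cx at h; exact_mod_cast h
  rcases lt_trichotomy a b with h1 | h1 | h1
  · have := sh_lt (Y := Y) h1 hb; omega
  · exact h1
  · have := sh_lt (Y := Y) h1 ha; omega

lemma vand_ne_zero (N : ℕ) (Y : YoungDiagram) : vand N (cx N Y) ≠ 0 := by
  unfold vand
  refine Finset.prod_ne_zero_iff.mpr fun k hk => Finset.prod_ne_zero_iff.mpr fun i hi => ?_
  simp only [Finset.mem_range] at hk hi
  intro h
  have := cx_inj N Y (by simp; omega) (by simpa using hk) (sub_eq_zero.mp h)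
  omega

lemma sum_cx (N : ℕ) (Y : YoungDiagram) (hN : ∀ k, N ≤ k → Y.rowLen k = 0) :
    ∑ i ∈ range N, cx N Y i = (Y.card : ℂ) + (N : ℂ) * (N - 1) / 2 := by
  unfold cx sh
  rw [card_eq_sum Y N hN]
  push_cast
  rw [Finset.sum_add_distrib]
  congr 1
  rw [Finset.sum_range_reflect (fun j => (j : ℂ)) N]
  clear hN
  induction N with
  | zero => simp
  | succ N ih => rw [Finset.sum_range_succ, ih]; push_cast; ring

/-- `L` is obtained from `Y` by adding a box in row `i`. -/
def Rel (i : ℕ) (Y L : YoungDiagram) : Prop :=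
  ∀ k, L.rowLen k = Y.rowLen k + if k = i then 1 else 0

lemma Rel.cx {N i : ℕ} {Y L : YoungDiagram} (h : Rel i Y L) (k : ℕ) :
    cx N L k = cx N Y k + if k = i then 1 else 0 := by
  unfold ZM.cx sh
  rw [h k]
  split_ifs <;> push_cast <;> ring

lemma Rel.hp {N i : ℕ} {Y L : YoungDiagram} (h : Rel i Y L) (hi : i < N)
    (hY : ∀ k, N ≤ k → Y.rowLen k = 0) (hL : ∀ k, N ≤ k → L.rowLen k = 0) :
    hp Y / hp L = acoef (range N) (ZM.cx N Y) i / (ZM.cx N Y i + 1) := by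
  have h1 := hp_vand Y N hY
  have h2 := hp_vand L N hL
  have hs := vand_step N (ZM.cx N Y) (ZM.cx N L) i hi (fun k hk => by simp [h.cx, hk])
    (by simp [h.cx])
  have hf : ∏ k ∈ range N, ((sh N L k).factorial : ℂ)
      = (ZM.cx N Y i + 1) * ∏ k ∈ range N, ((sh N Y k).factorial : ℂ) := by
    have hm : i ∈ range N := by simpa using hi
    rw [← Finset.mul_prod_erase _ _ hm,
      ← Finset.mul_prod_erase _ (fun k => ((sh N Y k).factorial : ℂ)) hm]
    have e1 : sh N L i = sh N Y i + 1 := by unfold sh; rw [h i]; simp; omega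
    rw [e1, Nat.factorial_succ, Finset.prod_congr rfl (fun k hk => by
      have : sh N L k = sh N Y k := by
        unfold sh; rw [h k]; simp [Finset.ne_of_mem_erase hk]
      rw [this] : ∀ k ∈ (range N).erase i,
        ((sh N L k).factorial : ℂ) = ((sh N Y k).factorial : ℂ))]
    unfold ZM.cx
    push_cast
    ring
  have hne : ∏ j ∈ (range N).erase i, (ZM.cx N Y i - ZM.cx N Y j) ≠ 0 := by
    refine Finset.prod_ne_zero_iff.mpr fun j hj hz => ?_
    have := cx_inj N Y (by simpa using hi) (by simpa using Finset.mem_of_mem_erase hj)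
      (sub_eq_zero.mp hz)
    exact Finset.ne_of_mem_erase hj this.symm
  have ha : acoef (range N) (ZM.cx N Y) i * ∏ j ∈ (range N).erase i, (ZM.cx N Y i - ZM.cx N Y j)
      = ∏ j ∈ (range N).erase i, (ZM.cx N Y i + 1 - ZM.cx N Y j) := by
    unfold acoef
    rw [← Finset.prod_mul_distrib]
    refine Finset.prod_congr rfl fun j hj => ?_
    have := Finset.prod_ne_zero_iff.mp hne j hj
    field_simp
    ring
  have hc : ZM.cx N Y i + 1 ≠ 0 := by unfold ZM.cx; exact Nat.cast_add_one_ne_zero _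
  rw [div_eq_div_iff (hp_ne_zero L) hc]
  have hvY := vand_ne_zero N Y
  rw [← ha] at hs
  have hs' : vand N (ZM.cx N L) = vand N (ZM.cx N Y) * acoef (range N) (ZM.cx N Y) i := by
    apply mul_right_cancel₀ hne
    rw [hs]; ring
  apply mul_right_cancel₀ hvY
  rw [hf, ← h1, hs'] at h2
  linear_combination -h2

lemma Rel.hp' {N i : ℕ} {Y L : YoungDiagram} (h : Rel i Y L) (hi : i < N)
    (hY : ∀ k, N ≤ k → Y.rowLen k = 0) (hL : ∀ k, N ≤ k → L.rowLen k = 0) :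
    ZM.hp L / ZM.hp Y = ZM.cx N L i * acoef (range N) (fun j => - ZM.cx N L j) i := by
  have h1 := hp_vand Y N hY
  have h2 := hp_vand L N hL
  have h3 := h.hp hi hY hL
  have hs := vand_step N (fun j => - ZM.cx N L j) (fun j => - ZM.cx N Y j) i hi
    (fun k hk => by simp [h.cx, hk]) (by simp [h.cx])
  have hneg : ∀ (w : ℕ → ℂ), vand N (fun j => - w j)
      = (∏ k ∈ range N, ∏ i ∈ range k, (-1 : ℂ)) * vand N w := by
    intro w
    unfold vand
    rw [← Finset.prod_mul_distrib]
    refine Finset.prod_congr rfl fun k _ => ?_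
    rw [← Finset.prod_mul_distrib]
    exact Finset.prod_congr rfl fun i _ => by ring
  have hsg : (∏ k ∈ range N, ∏ i ∈ range k, (-1 : ℂ)) ≠ 0 :=
    Finset.prod_ne_zero_iff.mpr fun k _ => Finset.prod_ne_zero_iff.mpr fun i _ => by norm_num
  rw [hneg, hneg, mul_assoc, mul_assoc] at hs
  have hs := mul_left_cancel₀ hsg hs
  have hs1 := vand_step N (ZM.cx N Y) (ZM.cx N L) i hi (fun k hk => by simp [h.cx, hk])
    (by simp [h.cx])
  have hne : ∏ j ∈ (range N).erase i, (- ZM.cx N L i - - ZM.cx N L j) ≠ 0 := by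
    refine Finset.prod_ne_zero_iff.mpr fun j hj hz => ?_
    have := cx_inj N L (by simpa using hi) (by simpa using Finset.mem_of_mem_erase hj)
      (neg_injective (sub_eq_zero.mp hz))
    exact Finset.ne_of_mem_erase hj this.symm
  have ha : acoef (range N) (fun j => - ZM.cx N L j) i *
      ∏ j ∈ (range N).erase i, (- ZM.cx N L i - - ZM.cx N L j)
      = ∏ j ∈ (range N).erase i, (- ZM.cx N L i + 1 - - ZM.cx N L j) := by
    unfold acoef
    rw [← Finset.prod_mul_distrib]
    refine Finset.prod_congr rfl fun j hj => ?_
    have := Finset.prod_ne_zero_iff.mp hne j hj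
    rw [add_mul, one_div, inv_mul_cancel₀ this]
    ring
  rw [← ha] at hs
  have hs' : vand N (ZM.cx N Y) = vand N (ZM.cx N L) * acoef (range N) (fun j => - ZM.cx N L j) i := by
    apply mul_right_cancel₀ hne
    rw [hs]; ring
  have hf : ∏ k ∈ range N, ((sh N L k).factorial : ℂ)
      = ZM.cx N L i * ∏ k ∈ range N, ((sh N Y k).factorial : ℂ) := by
    have hm : i ∈ range N := by simpa using hi
    rw [← Finset.mul_prod_erase _ _ hm,
      ← Finset.mul_prod_erase _ (fun k => ((sh N Y k).factorial : ℂ)) hm]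
    have e1 : sh N L i = sh N Y i + 1 := by unfold sh; rw [h i]; simp; omega
    unfold ZM.cx
    rw [e1, Nat.factorial_succ, Finset.prod_congr rfl (fun k hk => by
      have : sh N L k = sh N Y k := by
        unfold sh; rw [h k]; simp [Finset.ne_of_mem_erase hk]
      rw [this] : ∀ k ∈ (range N).erase i,
        ((sh N L k).factorial : ℂ) = ((sh N Y k).factorial : ℂ))]
    push_cast
    ring
  rw [div_eq_iff (hp_ne_zero Y)]
  apply mul_right_cancel₀ (vand_ne_zero N L)
  rw [h2, hf, ← h1, hs']
  ring

lemma Rel.cells {i : ℕ} {Y L : YoungDiagram} (h : Rel i Y L) :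
    L.cells = insert (i, Y.rowLen i) Y.cells := by
  ext ⟨a, b⟩
  simp only [Finset.mem_insert, YoungDiagram.mem_cells, YoungDiagram.mem_iff_lt_rowLen,
    Prod.mk.injEq]
  have := h a
  split_ifs at this with hc
  · subst hc; omega
  · omega

lemma Rel.notMem {i : ℕ} {Y : YoungDiagram} : (i, Y.rowLen i) ∉ Y.cells := by
  rw [YoungDiagram.mem_cells, YoungDiagram.mem_iff_lt_rowLen]
  omega

lemma Rel.card {i : ℕ} {Y L : YoungDiagram} (h : Rel i Y L) : L.card = Y.card + 1 := by
  have : L.cells.card = Y.cells.card + 1 := by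
    rw [h.cells, Finset.card_insert_of_notMem Rel.notMem]
  exact this

lemma zWeight_eq (z z' : ℂ) (Y : YoungDiagram) :
    zWeight z z' Y = (∏ c ∈ Y.cells, ((z + cellContent c) * (z' + cellContent c))) / hp Y ^ 2 := by
  unfold zWeight hp
  rw [Finset.prod_div_distrib, Finset.prod_pow]

lemma Rel.zWeight {i : ℕ} {Y L : YoungDiagram} (h : Rel i Y L) (z z' : ℂ) (N : ℕ) (hi : i < N) :
    ZM.hp L / ZM.hp Y * zWeight z z' L = _root_.zWeight z z' Y *
      ((z + (ZM.cx N Y i - N + 1)) * (z' + (ZM.cx N Y i - N + 1)) * (ZM.hp Y / ZM.hp L)) := by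
  rw [zWeight_eq, zWeight_eq, h.cells, Finset.prod_insert Rel.notMem]
  have e : ((cellContent (i, Y.rowLen i) : ℤ) : ℂ) = ZM.cx N Y i - N + 1 := by
    unfold cellContent ZM.cx sh
    have : ((N - 1 - i : ℕ) : ℂ) = N - 1 - i := by
      rw [Nat.sub_sub, Nat.cast_sub (by omega)]; push_cast; ring
    push_cast
    rw [this]
    ring
  rw [e]
  have h1 := hp_ne_zero L
  have h2 := hp_ne_zero Y
  field_simp

/-- Diagrams of size `n`. -/
lemma finite_card (n : ℕ) : {Y : YoungDiagram | Y.card = n}.Finite := by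
  have : Set.InjOn (fun Y : YoungDiagram => Y.cells) {Y : YoungDiagram | Y.card = n} :=
    fun a _ b _ h => YoungDiagram.ext h
  refine Set.Finite.of_finite_image ?_ this
  refine ((range (n + 1) ×ˢ range (n + 1)).powerset.finite_toSet).subset ?_
  rintro _ ⟨Y, hY, rfl⟩
  simp only [Finset.coe_powerset, Set.mem_preimage, Set.mem_powerset_iff, Finset.coe_subset]
  rintro ⟨i, j⟩ hc
  rw [Set.mem_ofPred_eq] at hY
  rw [YoungDiagram.mem_cells, YoungDiagram.mem_iff_lt_rowLen] at hc
  rw [Finset.mem_product, Finset.mem_range, Finset.mem_range]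
  constructor
  · by_contra hn
    simp only at hn
    have := rowLen_zero_of_le (Y := Y) (k := i) (by omega)
    omega
  · have h1 : (Y.row i).card ≤ Y.cells.card := Finset.card_le_card (Finset.filter_subset _ _)
    rw [← YoungDiagram.rowLen_eq_card] at h1
    have h2 : Y.cells.card = Y.card := rfl
    simp only
    omega

/-- The finset of diagrams of size `n`. -/
noncomputable def S (n : ℕ) : Finset YoungDiagram := (finite_card n).toFinset

lemma mem_S {n : ℕ} {Y : YoungDiagram} : Y ∈ S n ↔ Y.card = n := by simp [S]

open scoped Classical in
lemma down_term (n i : ℕ) (hi : i < n + 2) (L : YoungDiagram) (hL : L.card = n + 1) :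
    ∑ Y ∈ S n, (if Rel i Y L then hp L / hp Y else 0)
      = cx (n + 2) L i * acoef (range (n + 2)) (fun j => - cx (n + 2) L j) i := by
  have hL0 : ∀ k, n + 1 ≤ k → L.rowLen k = 0 := fun k hk => rowLen_zero_of_le (by omega)
  by_cases hr : L.rowLen (i + 1) < L.rowLen i
  · have hanti : Antitone (fun k => if k = i then L.rowLen i - 1 else L.rowLen k) := by
      intro a b hab
      have h1 := L.rowLen_anti a b hab
      have h2 := fun h : i + 1 ≤ b => L.rowLen_anti (i + 1) b h
      simp only
      split_ifs with h3 h4 h4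
      · omega
      · subst h3; omega
      · subst h4
        have := h2 (by omega)
        omega
      · omega
    have hrow := rowLen_ofFun _ hanti (n + 2) (fun k hk => by
      have := hL0 k (by omega)
      have : k ≠ i := by omega
      simp [*])
    set Y := ofFun _ hanti (n + 2) with hYdef
    have hrel : Rel i Y L := by
      intro k
      rw [hrow k]
      split_ifs with h
      · subst h; omega
      · omega
    have hcard : Y.card = n := by have := hrel.card; omega
    rw [Finset.sum_eq_single Y]
    · rw [if_pos hrel]
      exact hrel.hp' hi (fun k hk => rowLen_zero_of_le (by omega)) (fun k hk => hL0 k (by omega))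
    · intro Z _ hne
      rw [if_neg]
      intro hZ
      refine hne (eq_of_rowLen fun k => ?_)
      have h1 := hZ k
      have h2 := hrel k
      omega
    · intro h
      exact absurd (mem_S.mpr hcard) h
  · rw [Finset.sum_eq_zero]
    · by_cases hl : i = n + 1
      · subst hl
        have : cx (n + 2) L (n + 1) = 0 := by
          unfold cx sh
          rw [hL0 _ le_rfl]
          simp
        rw [this, zero_mul]
      · symm
        apply mul_eq_zero_of_right
        unfold acoef
        refine Finset.prod_eq_zero (i := i + 1) (by simp; omega) ?_
        have h1 := L.rowLen_anti i (i + 1) (by omega)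
        have : sh (n + 2) L i = sh (n + 2) L (i + 1) + 1 := by unfold sh; omega
        unfold cx
        simp only [this]
        push_cast
        norm_num
    · intro Y _
      rw [if_neg]
      intro h
      have h1 := h i
      have h2 := h (i + 1)
      have h3 := Y.rowLen_anti i (i + 1) (by omega)
      simp at h1 h2
      omega

open scoped Classical in
lemma up_term (n i : ℕ) (hi : i < n + 2) (Y : YoungDiagram) (hY : Y.card = n) :
    ∑ L ∈ S (n + 1), (if Rel i Y L then hp Y / hp L else 0)
      = acoef (range (n + 2)) (cx (n + 2) Y) i / (cx (n + 2) Y i + 1) := by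
  have hY0 : ∀ k, n ≤ k → Y.rowLen k = 0 := fun k hk => rowLen_zero_of_le (by omega)
  by_cases hr : i = 0 ∨ Y.rowLen i < Y.rowLen (i - 1)
  · have hanti : Antitone (fun k => if k = i then Y.rowLen i + 1 else Y.rowLen k) := by
      intro a b hab
      have h1 := Y.rowLen_anti a b hab
      have h2 := fun h : a ≤ i - 1 => Y.rowLen_anti a (i - 1) h
      simp only
      split_ifs with h3 h4 h4
      · omega
      · subst h3
        rcases hr with hr | hr
        · omega
        · have := h2 (by omega)
          omega
      · subst h4; omega
      · omega
    have hrow := rowLen_ofFun _ hanti (n + 2) (fun k hk => by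
      have := hY0 k (by omega)
      have : k ≠ i := by omega
      simp [*])
    set L := ofFun _ hanti (n + 2) with hLdef
    have hrel : Rel i Y L := by
      intro k
      rw [hrow k]
      split_ifs with h
      · subst h; omega
      · omega
    have hcard : L.card = n + 1 := by have := hrel.card; omega
    rw [Finset.sum_eq_single L]
    · rw [if_pos hrel]
      exact hrel.hp hi (fun k hk => hY0 k (by omega)) (fun k hk => rowLen_zero_of_le (by omega))
    · intro Z _ hne
      rw [if_neg]
      intro hZ
      refine hne (eq_of_rowLen fun k => ?_)
      rw [hZ k, hrel k]
    · intro h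
      exact absurd (mem_S.mpr hcard) h
  · push Not at hr
    rw [Finset.sum_eq_zero]
    · symm
      have : acoef (range (n + 2)) (cx (n + 2) Y) i = 0 := by
        unfold acoef
        refine Finset.prod_eq_zero (i := i - 1) (by simp; omega) ?_
        have h1 := Y.rowLen_anti (i - 1) i (by omega)
        have : sh (n + 2) Y (i - 1) = sh (n + 2) Y i + 1 := by unfold sh; omega
        unfold cx
        rw [this]
        push_cast
        norm_num
      rw [this, zero_div]
    · intro L _
      rw [if_neg]
      intro h
      have h1 := h i
      have h2 := h (i - 1)
      have h3 := L.rowLen_anti (i - 1) i (by omega)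
      rw [if_pos rfl] at h1
      rw [if_neg (by omega)] at h2
      omega

open scoped Classical in
lemma step (n : ℕ) (z z' : ℂ) :
    ((n : ℂ) + 1) * ∑ L ∈ S (n + 1), zWeight z z' L
      = (z * z' + n) * ∑ Y ∈ S n, zWeight z z' Y := by
  have h1 : ∀ L ∈ S (n + 1), ((n : ℂ) + 1) * zWeight z z' L
      = ∑ Y ∈ S n, ∑ i ∈ range (n + 2),
        (if Rel i Y L then hp L / hp Y * zWeight z z' L else 0) := by
    intro L hL
    rw [mem_S] at hL
    have hd := sum_down (cx (n + 2) L) (n + 2) (cx_inj _ _) (L.card : ℂ)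
      (sum_cx (n + 2) L (fun k hk => rowLen_zero_of_le (by omega)))
    rw [Finset.sum_comm, show ((n : ℂ) + 1) = (L.card : ℂ) by rw [hL]; push_cast; ring, ← hd,
      Finset.sum_mul]
    refine Finset.sum_congr rfl fun i hi => ?_
    rw [← down_term n i (Finset.mem_range.mp hi) L hL, Finset.sum_mul]
    exact Finset.sum_congr rfl fun Y _ => by split_ifs <;> simp
  have h2 : ∀ Y ∈ S n, (z * z' + n) * zWeight z z' Y
      = ∑ L ∈ S (n + 1), ∑ i ∈ range (n + 2),
        (if Rel i Y L then hp L / hp Y * zWeight z z' L else 0) := by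
    intro Y hY
    rw [mem_S] at hY
    have hu := sum_up (cx (n + 2) Y) (n + 2) (cx_inj _ _)
      ⟨n + 1, by simp, by
        unfold cx sh
        rw [rowLen_zero_of_le (by omega)]
        simp⟩
      (fun i _ => by unfold cx; exact Nat.cast_add_one_ne_zero _) (Y.card : ℂ) z z'
      (sum_cx (n + 2) Y (fun k hk => rowLen_zero_of_le (by omega)))
    rw [hY] at hu
    rw [Finset.sum_comm, ← hu, Finset.sum_mul]
    refine Finset.sum_congr rfl fun i hi => ?_
    have hi' := Finset.mem_range.mp hi
    rw [← up_term n i hi' Y hY, Finset.mul_sum, Finset.sum_mul]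
    refine Finset.sum_congr rfl fun L _ => ?_
    split_ifs with h
    · rw [h.zWeight z z' (n + 2) hi']
      ring
    · simp
  rw [Finset.mul_sum, Finset.mul_sum, Finset.sum_congr rfl h1, Finset.sum_congr rfl h2,
    Finset.sum_comm]

lemma main (n : ℕ) (z z' : ℂ) :
    (n.factorial : ℂ) * ∑ Y ∈ S n, zWeight z z' Y = (ascPochhammer ℂ n).eval (z * z') := by
  induction n with
  | zero =>
    have : S 0 = {⊥} := by
      ext Y
      rw [mem_S, Finset.mem_singleton]
      constructor
      · intro h
        exact YoungDiagram.ext (by simpa using Finset.card_eq_zero.mp h)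
      · rintro rfl
        rfl
    rw [this]
    simp [zWeight]
  | succ n ih =>
    rw [ascPochhammer_succ_eval, ← ih, Nat.factorial_succ]
    push_cast
    linear_combination (n.factorial : ℂ) * step n z z'

end ZM

/-- For every `n ∈ ℕ` and all `z, z' ∈ ℂ`:
`Σ_{λ ⊢ n} n! · Π_{□∈λ} (z + c(□))(z' + c(□)) / h(□)² = (zz')_n`,
the sum being over all partitions (Young diagrams) of size `n`.
(There are finitely many such diagrams, so the `tsum` is a genuine finite sum.) -/
theorem sum_zMeasure_numerator (n : ℕ) (z z' : ℂ) :
    ∑' Y : {Y : YoungDiagram // Y.card = n}, ((n.factorial : ℂ) * zWeight z z' Y.1) =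
      (ascPochhammer ℂ n).eval (z * z') := by
  rw [← ZM.main n z z', Finset.mul_sum]
  have : Fintype {Y : YoungDiagram // Y.card = n} := (ZM.finite_card n).fintype
  rw [tsum_fintype]
  symm
  exact Finset.sum_subtype (ZM.S n) (fun _ => ZM.mem_S)
    (fun Y => (n.factorial : ℂ) * zWeight z z' Y)
end

section
/- Fix z, z' ∈ ℂ. Define linear operators U, D, L on the space of finitely supported complex-valued functions on the set of all partitions (with basis {δ_λ}) by: U δ_λ = Σ_{μ = λ+□} (z + c(□)) δ_μ, where the sum is over all partitions μ obtained from λ by adding one square □; D δ_λ = Σ_{μ = λ−□} (z' + c(□)) δ_μ, where the sum is over all partitions μ obtained from λ by removing one square □; and L δ_λ = (zz' + 2|λ|) δ_λ. Then these operators satisfy the sl(2) commutation relation D∘U − U∘D = L. -/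
open scoped Classical

noncomputable section

/-- Kerov's raising operator `U` on the space of finitely supported complex functions on
partitions: `U δ_λ = Σ_{μ = λ+□} (z + c(□)) δ_μ`. -/
def kerovU (z : ℂ) (f : YoungDiagram →₀ ℂ) : YoungDiagram →₀ ℂ :=
  f.sum fun Y a => ∑ c ∈ addables Y, Finsupp.single (addBox Y c) ((z + cellContent c) * a)

/-- Kerov's lowering operator `D`:  `D δ_λ = Σ_{μ = λ−□} (z' + c(□)) δ_μ`. -/
def kerovD (z' : ℂ) (f : YoungDiagram →₀ ℂ) : YoungDiagram →₀ ℂ :=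
  f.sum fun Y a => ∑ c ∈ removables Y, Finsupp.single (removeBox Y c) ((z' + cellContent c) * a)

/-- Kerov's operator `L`:  `L δ_λ = (zz' + 2|λ|) δ_λ`. -/
def kerovL (z z' : ℂ) (f : YoungDiagram →₀ ℂ) : YoungDiagram →₀ ℂ :=
  f.sum fun Y a => Finsupp.single Y ((z * z' + 2 * (Y.card : ℂ)) * a)

theorem kv_mem_addables (Y : YoungDiagram) (c : ℕ × ℕ) :
    c ∈ addables Y ↔ c ∉ Y.cells ∧ ∀ d : ℕ × ℕ, d ≤ c → d ≠ c → d ∈ Y.cells := by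
  obtain ⟨i, j⟩ := c
  simp only [addables, Finset.mem_filter, Finset.mem_image, Finset.mem_range, Prod.mk.injEq]
  constructor
  · rintro ⟨⟨a, ha, rfl, rfl⟩, h⟩
    refine ⟨?_, h⟩
    rw [YoungDiagram.mem_cells, YoungDiagram.mem_iff_lt_rowLen]
    exact lt_irrefl _
  · rintro ⟨h1, h2⟩
    refine ⟨⟨i, ?_, rfl, ?_⟩, h2⟩
    · by_contra hlt
      have hi : 0 < i := by omega
      have := h2 (i - 1, 0) (Prod.mk_le_mk.mpr ⟨by omega, by omega⟩)
        (by intro h; rw [Prod.mk.injEq] at h; omega)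
      rw [YoungDiagram.mem_cells, YoungDiagram.mem_iff_lt_colLen] at this
      omega
    · rw [YoungDiagram.mem_cells, YoungDiagram.mem_iff_lt_rowLen] at h1
      by_contra hne
      have := h2 (i, Y.rowLen i) (Prod.mk_le_mk.mpr ⟨le_rfl, by omega⟩)
        (by intro h; rw [Prod.mk.injEq] at h; omega)
      rw [YoungDiagram.mem_cells, YoungDiagram.mem_iff_lt_rowLen] at this
      omega

theorem kv_mem_removables (Y : YoungDiagram) (c : ℕ × ℕ) :
    c ∈ removables Y ↔ c ∈ Y.cells ∧ (c.1 + 1, c.2) ∉ Y.cells ∧ (c.1, c.2 + 1) ∉ Y.cells := by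
  simp [removables]

theorem kv_addBox_cells {Y : YoungDiagram} {c : ℕ × ℕ} (h : c ∈ addables Y) :
    (addBox Y c).cells = insert c Y.cells := by
  rw [kv_mem_addables] at h
  rw [addBox, dif_pos h]

theorem kv_removeBox_cells {Y : YoungDiagram} {c : ℕ × ℕ} (h : c ∈ removables Y) :
    (removeBox Y c).cells = Y.cells.erase c := by
  rw [kv_mem_removables] at h
  rw [removeBox, dif_pos h.2]

theorem kv_succ_le {d c : ℕ × ℕ} (h : d ≤ c) (hne : d ≠ c) :
    (d.1 + 1, d.2) ≤ c ∨ (d.1, d.2 + 1) ≤ c := by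
  rcases Prod.lt_iff.mp (lt_of_le_of_ne h hne) with ⟨h1, h2⟩ | ⟨h1, h2⟩
  · exact Or.inl (Prod.mk_le_mk.mpr ⟨h1, h2⟩)
  · exact Or.inr (Prod.mk_le_mk.mpr ⟨h1, h2⟩)

theorem kv_self_mem_removables {Y : YoungDiagram} {c : ℕ × ℕ} (h : c ∈ addables Y) :
    c ∈ removables (addBox Y c) := by
  rw [kv_mem_removables, kv_addBox_cells h]
  rw [kv_mem_addables] at h
  refine ⟨Finset.mem_insert_self _ _, ?_, ?_⟩
  · intro h'
    rcases Finset.mem_insert.mp h' with h' | h'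
    · have := congrArg Prod.fst h'
      simp at this
    · exact h.1 (Y.isLowerSet (show c ≤ (c.1 + 1, c.2) from ⟨by simp, le_rfl⟩) h')
  · intro h'
    rcases Finset.mem_insert.mp h' with h' | h'
    · have := congrArg Prod.snd h'
      simp at this
    · exact h.1 (Y.isLowerSet (show c ≤ (c.1, c.2 + 1) from ⟨le_rfl, by simp⟩) h')

theorem kv_self_mem_addables {Y : YoungDiagram} {d : ℕ × ℕ} (h : d ∈ removables Y) :
    d ∈ addables (removeBox Y d) := by
  rw [kv_mem_addables, kv_removeBox_cells h]
  rw [kv_mem_removables] at h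
  refine ⟨by simp, fun e he hne => Finset.mem_erase.mpr ⟨hne, Y.isLowerSet he h.1⟩⟩

theorem kv_remove_add {Y : YoungDiagram} {c : ℕ × ℕ} (h : c ∈ addables Y) :
    removeBox (addBox Y c) c = Y := by
  apply YoungDiagram.ext
  rw [kv_removeBox_cells (kv_self_mem_removables h), kv_addBox_cells h]
  exact Finset.erase_insert ((kv_mem_addables _ _).mp h).1

theorem kv_add_remove {Y : YoungDiagram} {c : ℕ × ℕ} (h : c ∈ removables Y) :
    addBox (removeBox Y c) c = Y := by
  apply YoungDiagram.ext
  rw [kv_addBox_cells (kv_self_mem_addables h), kv_removeBox_cells h]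
  exact Finset.insert_erase ((kv_mem_removables _ _).mp h).1

theorem kv_swap (Y : YoungDiagram) (c d : ℕ × ℕ) :
    (c ∈ addables Y ∧ d ∈ (removables (addBox Y c)).erase c) ↔
      (c ∈ (addables (removeBox Y d)).erase d ∧ d ∈ removables Y) := by
  constructor
  · rintro ⟨hc, hd⟩
    obtain ⟨hne, hd⟩ := Finset.mem_erase.mp hd
    rw [kv_mem_removables, kv_addBox_cells hc] at hd
    simp only [Finset.mem_insert, not_or] at hd
    obtain ⟨hd1, ⟨hd2, hd3⟩, hd4, hd5⟩ := hd
    have hd1 := hd1.resolve_left hne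
    have hR : d ∈ removables Y := (kv_mem_removables _ _).mpr ⟨hd1, hd3, hd5⟩
    refine ⟨Finset.mem_erase.mpr ⟨hne.symm, ?_⟩, hR⟩
    rw [kv_mem_addables, kv_removeBox_cells hR]
    rw [kv_mem_addables] at hc
    refine ⟨fun h => hc.1 (Finset.mem_of_mem_erase h), fun e he hec => ?_⟩
    refine Finset.mem_erase.mpr ⟨?_, hc.2 e he hec⟩
    rintro rfl
    rcases kv_succ_le he hec with h | h
    · exact hd3 (hc.2 _ h hd2)
    · exact hd5 (hc.2 _ h hd4)
  · rintro ⟨hc, hd⟩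
    obtain ⟨hne, hc⟩ := Finset.mem_erase.mp hc
    rw [kv_mem_addables, kv_removeBox_cells hd] at hc
    obtain ⟨hc1, hc2⟩ := hc
    have hcY : c ∉ Y.cells := fun h => hc1 (Finset.mem_erase.mpr ⟨hne, h⟩)
    have hA : c ∈ addables Y := (kv_mem_addables _ _).mpr
      ⟨hcY, fun e he hec => Finset.mem_of_mem_erase (hc2 e he hec)⟩
    refine ⟨hA, Finset.mem_erase.mpr ⟨hne.symm, ?_⟩⟩
    rw [kv_mem_removables, kv_addBox_cells hA]
    rw [kv_mem_removables] at hd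
    have key : ¬ d ≤ c := fun h => by
      have := hc2 d h hne.symm
      simp at this
    refine ⟨Finset.mem_insert_of_mem hd.1, ?_, ?_⟩
    · intro h
      rcases Finset.mem_insert.mp h with h | h
      · exact key (h ▸ (show d ≤ (d.1 + 1, d.2) from ⟨by simp, le_rfl⟩))
      · exact hd.2.1 h
    · intro h
      rcases Finset.mem_insert.mp h with h | h
      · exact key (h ▸ (show d ≤ (d.1, d.2 + 1) from ⟨le_rfl, by simp⟩))
      · exact hd.2.2 h

theorem kv_comm {Y : YoungDiagram} {c d : ℕ × ℕ} (hc : c ∈ addables Y)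
    (hd : d ∈ (removables (addBox Y c)).erase c) :
    removeBox (addBox Y c) d = addBox (removeBox Y d) c := by
  obtain ⟨hc', hd'⟩ := (kv_swap Y c d).mp ⟨hc, hd⟩
  apply YoungDiagram.ext
  rw [kv_removeBox_cells (Finset.mem_of_mem_erase hd), kv_addBox_cells hc,
    kv_addBox_cells (Finset.mem_of_mem_erase hc'), kv_removeBox_cells hd']
  exact Finset.erase_insert_of_ne (Finset.ne_of_mem_erase hc')

theorem kv_sum_add (Y : YoungDiagram) (f : ℤ → ℂ) :
    ∑ c ∈ addables Y, f (cellContent c) = f (Y.rowLen 0) +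
      ∑ i ∈ Finset.range (Y.colLen 0), if Y.rowLen (i + 1) < Y.rowLen i then
        f ((Y.rowLen (i + 1) : ℤ) - ((i : ℤ) + 1)) else 0 := by
  have hA : addables Y = ((Finset.range (Y.colLen 0 + 1)).filter
      fun i => ∀ k < i, Y.rowLen i < Y.rowLen k).image fun i => (i, Y.rowLen i) := by
    ext ⟨i, j⟩
    simp only [addables, Finset.mem_filter, Finset.mem_image, Finset.mem_range, Prod.mk.injEq]
    constructor
    · rintro ⟨⟨a, ha, rfl, rfl⟩, h⟩
      refine ⟨a, ⟨ha, fun k hk => ?_⟩, rfl, rfl⟩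
      have := h (k, Y.rowLen a) (Prod.mk_le_mk.mpr ⟨hk.le, le_rfl⟩)
        (by intro h; rw [Prod.mk.injEq] at h; omega)
      rwa [YoungDiagram.mem_cells, YoungDiagram.mem_iff_lt_rowLen] at this
    · rintro ⟨a, ⟨ha, h⟩, rfl, rfl⟩
      refine ⟨⟨a, ha, rfl, rfl⟩, ?_⟩
      rintro ⟨k, l⟩ hle hne
      obtain ⟨h1, h2⟩ := Prod.mk_le_mk.mp hle
      rw [YoungDiagram.mem_cells, YoungDiagram.mem_iff_lt_rowLen]
      rcases h1.lt_or_eq with h1 | rfl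
      · exact lt_of_le_of_lt h2 (h k h1)
      · exact lt_of_le_of_ne h2 (fun h => hne (by rw [h]))
  rw [hA, Finset.sum_image (by intro a _ b _ h; exact congrArg Prod.fst h), Finset.sum_filter,
    Finset.sum_range_succ', add_comm]
  refine congrArg₂ (· + ·) ?_ ?_
  · simp [cellContent]
  · refine Finset.sum_congr rfl fun i _ => ?_
    have : (∀ k < i + 1, Y.rowLen (i + 1) < Y.rowLen k) ↔ Y.rowLen (i + 1) < Y.rowLen i := by
      constructor
      · intro h
        exact h i (Nat.lt_succ_self i)
      · intro h k hk
        exact lt_of_lt_of_le h (Y.rowLen_anti k i (by omega))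
    simp only [this]
    simp [cellContent]

theorem kv_sum_remove (Y : YoungDiagram) (f : ℤ → ℂ) :
    ∑ c ∈ removables Y, f (cellContent c) =
      ∑ i ∈ Finset.range (Y.colLen 0), if Y.rowLen (i + 1) < Y.rowLen i then
        f ((Y.rowLen i : ℤ) - ((i : ℤ) + 1)) else 0 := by
  have hR : removables Y = ((Finset.range (Y.colLen 0)).filter
      fun i => Y.rowLen (i + 1) < Y.rowLen i).image fun i => (i, Y.rowLen i - 1) := by
    ext ⟨i, j⟩
    have h0 : i < Y.colLen 0 ↔ 0 < Y.rowLen i := by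
      rw [← YoungDiagram.mem_iff_lt_rowLen, ← YoungDiagram.mem_iff_lt_colLen]
    simp only [kv_mem_removables, Finset.mem_filter, Finset.mem_image, Finset.mem_range,
      Prod.mk.injEq, YoungDiagram.mem_cells, YoungDiagram.mem_iff_lt_rowLen]
    constructor
    · rintro ⟨h1, h2, h3⟩
      exact ⟨i, ⟨h0.mpr (by omega), by omega⟩, rfl, by omega⟩
    · rintro ⟨a, ⟨h1, h2⟩, rfl, rfl⟩
      omega
  rw [hR, Finset.sum_image (by intro a _ b _ h; exact congrArg Prod.fst h), Finset.sum_filter]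
  refine Finset.sum_congr rfl fun i _ => ?_
  split_ifs with h
  · congr 1
    simp only [cellContent]
    omega
  · rfl

theorem kv_card (Y : YoungDiagram) :
    Y.card = ∑ i ∈ Finset.range (Y.colLen 0), Y.rowLen i := by
  have := Finset.card_eq_sum_card_fiberwise (s := Y.cells) (t := Finset.range (Y.colLen 0))
    (f := Prod.fst) (by
      rintro ⟨i, j⟩ h
      simp only [Finset.coe_range, Set.mem_Iio]
      rw [← YoungDiagram.mem_iff_lt_colLen]
      exact Y.up_left_mem le_rfl (Nat.zero_le j) h)
  rw [YoungDiagram.card, this]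
  refine Finset.sum_congr rfl fun i _ => ?_
  rw [YoungDiagram.rowLen_eq_card]
  rfl

theorem kv_diag_aux (z z' : ℂ) (l : ℕ → ℕ) (hl : ∀ i, l (i + 1) ≤ l i) (n : ℕ) :
    ((z + l 0) * (z' + l 0) +
      ∑ i ∈ Finset.range n, if l (i + 1) < l i then
        (z + (((l (i + 1) : ℤ) - ((i : ℤ) + 1) : ℤ) : ℂ)) *
          (z' + (((l (i + 1) : ℤ) - ((i : ℤ) + 1) : ℤ) : ℂ)) else 0) -
      (∑ i ∈ Finset.range n, if l (i + 1) < l i then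
        (z + (((l i : ℤ) - ((i : ℤ) + 1) : ℤ) : ℂ)) *
          (z' + (((l i : ℤ) - ((i : ℤ) + 1) : ℤ) : ℂ)) else 0) =
      (z + ((l n : ℂ) - n)) * (z' + ((l n : ℂ) - n)) - (z + z') * (-(n : ℂ)) - (n : ℂ) ^ 2
        + 2 * ∑ i ∈ Finset.range n, (l i : ℂ) := by
  induction n with
  | zero => simp
  | succ n ih =>
    rw [Finset.sum_range_succ, Finset.sum_range_succ, Finset.sum_range_succ]
    split_ifs with h
    · push_cast at ih ⊢
      linear_combination ih
    · have : l (n + 1) = l n := le_antisymm (hl n) (not_lt.mp h)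
      rw [this]
      push_cast at ih ⊢
      linear_combination ih

theorem kv_diag (z z' : ℂ) (Y : YoungDiagram) :
    ∑ c ∈ addables Y, (z + cellContent c) * (z' + cellContent c) -
      ∑ c ∈ removables Y, (z + cellContent c) * (z' + cellContent c) =
      z * z' + 2 * (Y.card : ℂ) := by
  rw [kv_sum_add Y (fun x => (z + x) * (z' + x)), kv_sum_remove Y (fun x => (z + x) * (z' + x))]
  have h := kv_diag_aux z z' Y.rowLen (fun i => Y.rowLen_anti i (i + 1) (Nat.le_succ i))
    (Y.colLen 0)
  have h0 : Y.rowLen (Y.colLen 0) = 0 := by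
    by_contra hne
    have := YoungDiagram.mem_iff_lt_rowLen.mpr (Nat.pos_of_ne_zero hne)
    rw [YoungDiagram.mem_iff_lt_colLen] at this
    exact lt_irrefl _ this
  rw [h0] at h
  rw [kv_card]
  push_cast at h ⊢
  rw [h]
  ring

theorem kv_U_single (z : ℂ) (Y : YoungDiagram) (a : ℂ) :
    kerovU z (Finsupp.single Y a) =
      ∑ c ∈ addables Y, Finsupp.single (addBox Y c) ((z + cellContent c) * a) := by
  rw [kerovU, Finsupp.sum_single_index]
  simp

theorem kv_D_single (z : ℂ) (Y : YoungDiagram) (a : ℂ) :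
    kerovD z (Finsupp.single Y a) =
      ∑ c ∈ removables Y, Finsupp.single (removeBox Y c) ((z + cellContent c) * a) := by
  rw [kerovD, Finsupp.sum_single_index]
  simp

theorem kv_L_single (z z' : ℂ) (Y : YoungDiagram) (a : ℂ) :
    kerovL z z' (Finsupp.single Y a) =
      Finsupp.single Y ((z * z' + 2 * (Y.card : ℂ)) * a) := by
  rw [kerovL, Finsupp.sum_single_index]
  simp

theorem kv_U_add (z : ℂ) (f g : YoungDiagram →₀ ℂ) :
    kerovU z (f + g) = kerovU z f + kerovU z g := by
  unfold kerovU
  refine Finsupp.sum_add_index' (by simp) (fun Y a b => ?_)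
  simp only [mul_add, Finsupp.single_add, Finset.sum_add_distrib]

theorem kv_D_add (z : ℂ) (f g : YoungDiagram →₀ ℂ) :
    kerovD z (f + g) = kerovD z f + kerovD z g := by
  unfold kerovD
  refine Finsupp.sum_add_index' (by simp) (fun Y a b => ?_)
  simp only [mul_add, Finsupp.single_add, Finset.sum_add_distrib]

theorem kv_L_add (z z' : ℂ) (f g : YoungDiagram →₀ ℂ) :
    kerovL z z' (f + g) = kerovL z z' f + kerovL z z' g := by
  unfold kerovL
  refine Finsupp.sum_add_index' (by simp) (fun Y a b => ?_)
  simp only [mul_add, Finsupp.single_add]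

theorem kv_U_sum (z : ℂ) (s : Finset (ℕ × ℕ)) (f : ℕ × ℕ → YoungDiagram →₀ ℂ) :
    kerovU z (∑ c ∈ s, f c) = ∑ c ∈ s, kerovU z (f c) :=
  map_sum (AddMonoidHom.mk' (kerovU z) (kv_U_add z)) f s

theorem kv_D_sum (z : ℂ) (s : Finset (ℕ × ℕ)) (f : ℕ × ℕ → YoungDiagram →₀ ℂ) :
    kerovD z (∑ c ∈ s, f c) = ∑ c ∈ s, kerovD z (f c) :=
  map_sum (AddMonoidHom.mk' (kerovD z) (kv_D_add z)) f s

theorem kv_single (z z' : ℂ) (Y : YoungDiagram) (a : ℂ) :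
    kerovD z' (kerovU z (Finsupp.single Y a)) =
      kerovU z (kerovD z' (Finsupp.single Y a)) + kerovL z z' (Finsupp.single Y a) := by
  rw [kv_U_single, kv_D_single, kv_D_sum, kv_U_sum, kv_L_single]
  simp only [kv_U_single, kv_D_single]
  have h1 : ∀ c ∈ addables Y, ∑ d ∈ removables (addBox Y c),
      Finsupp.single (removeBox (addBox Y c) d)
        ((z' + cellContent d) * ((z + cellContent c) * a)) =
      Finsupp.single Y ((z + cellContent c) * (z' + cellContent c) * a) +
      ∑ d ∈ (removables (addBox Y c)).erase c,
        Finsupp.single (addBox (removeBox Y d) c)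
        ((z + cellContent c) * ((z' + cellContent d) * a)) := by
    intro c hc
    rw [← Finset.add_sum_erase _ _ (kv_self_mem_removables hc), kv_remove_add hc]
    congr 1
    · congr 1
      ring
    · refine Finset.sum_congr rfl fun d hd => ?_
      rw [kv_comm hc hd]
      congr 1
      ring
  have h2 : ∀ d ∈ removables Y, ∑ c ∈ addables (removeBox Y d),
      Finsupp.single (addBox (removeBox Y d) c)
        ((z + cellContent c) * ((z' + cellContent d) * a)) =
      Finsupp.single Y ((z + cellContent d) * (z' + cellContent d) * a) +
      ∑ c ∈ (addables (removeBox Y d)).erase d,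
        Finsupp.single (addBox (removeBox Y d) c)
        ((z + cellContent c) * ((z' + cellContent d) * a)) := by
    intro d hd
    rw [← Finset.add_sum_erase _ _ (kv_self_mem_addables hd), kv_add_remove hd]
    congr 2
    ring
  rw [Finset.sum_congr rfl h1, Finset.sum_congr rfl h2, Finset.sum_add_distrib,
    Finset.sum_add_distrib, Finset.sum_comm' (kv_swap Y), ← Finsupp.single_finsetSum,
    ← Finsupp.single_finsetSum, ← Finset.sum_mul, ← Finset.sum_mul, ← kv_diag z z' Y,
    sub_mul, Finsupp.single_sub]
  abel

/-- The Kerov operators satisfy the `sl(2)` commutation relation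
`D∘U − U∘D = L`. -/
theorem kerov_commutator_DU (z z' : ℂ) :
    (kerovD z') ∘ (kerovU z) - (kerovU z) ∘ (kerovD z') = kerovL z z' := by
  funext f
  simp only [Pi.sub_apply, Function.comp_apply]
  rw [sub_eq_iff_eq_add']
  induction f using Finsupp.induction_linear with
  | zero => simp [kerovU, kerovD, kerovL]
  | add f g hf hg =>
    rw [kv_U_add, kv_D_add, kv_D_add, kv_U_add, kv_L_add, hf, hg]
    abel
  | single Y a => exact kv_single z z' Y a

end
end

section
/- For all z, z' ∈ ℂ and all ξ ∈ ℂ with |ξ| < 1, the series Σ_λ ξ^{|λ|} Π_{□∈λ} (z + c(□))(z' + c(□)) / h(□)², summed over all partitions λ of all sizes, converges absolutely and equals (1 − ξ)^{−zz'} (principal branch). -/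
open scoped Classical

noncomputable section

open Finset in
theorem zz_sum_det_updateRow {N : ℕ} (M : Matrix (Fin N) (Fin N) ℂ) (d : Fin N → ℂ) :
    ∑ i, (M.updateRow i (fun j => d j * M i j)).det = (∑ j, d j) * M.det := by
  have h : ∀ i, (M.updateRow i (fun j => d j * M i j)).det
      = ∑ j, d j * (M i j * M.adjugate j i) := by
    intro i
    rw [← Matrix.cramer_transpose_apply]
    rw [Matrix.cramer_eq_adjugate_mulVec, Matrix.mulVec, dotProduct]
    refine Finset.sum_congr rfl fun j _ => ?_
    rw [← Matrix.adjugate_transpose, Matrix.transpose_apply]; ring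
  simp_rw [h]
  rw [Finset.sum_comm, Finset.sum_mul]
  refine Finset.sum_congr rfl fun j _ => ?_
  rw [← Finset.mul_sum]
  congr 1
  have h2 := congrFun (congrFun (Matrix.adjugate_mul M) j) j
  rw [Matrix.mul_apply] at h2
  simp only [Matrix.smul_apply, Matrix.one_apply_eq, smul_eq_mul, mul_one] at h2
  rw [← h2]
  exact Finset.sum_congr rfl fun i _ => mul_comm _ _

/-- Vandermonde determinant. -/
def zzV {N : ℕ} (x : Fin N → ℂ) : ℂ := (Matrix.vandermonde x).det

theorem zz_asc_shift (k : ℕ) (t : ℂ) :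
    t * (ascPochhammer ℂ k).eval (t + 1) = (t + k) * (ascPochhammer ℂ k).eval t := by
  have h1 : (ascPochhammer ℂ (k+1)).eval t = t * (ascPochhammer ℂ k).eval (t+1) := by
    rw [ascPochhammer_succ_left]; simp
  rw [← h1, ascPochhammer_succ_eval]; ring

theorem zzV_eq_det {N : ℕ} (c : ℂ) (x : Fin N → ℂ) :
    zzV x = (Matrix.of fun i j : Fin N => (ascPochhammer ℂ j).eval (x i + c)).det := by
  unfold zzV
  rw [Matrix.det_eval_matrixOfPolynomials_eq_det_vandermonde x
    (fun j => (ascPochhammer ℂ j).comp (Polynomial.X + Polynomial.C c))]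
  · simp
  · intro i
    simp [Polynomial.natDegree_comp]
  · intro i
    exact (monic_ascPochhammer ℂ i).comp_X_add_C c

theorem zzV_up {N : ℕ} (c : ℂ) (x : Fin N → ℂ) :
    ∑ i, (x i + c) * zzV (Function.update x i (x i + 1))
      = (∑ i, (x i + c) + ∑ j : Fin N, (j : ℂ)) * zzV x := by
  set M : Matrix (Fin N) (Fin N) ℂ :=
    Matrix.of fun i j : Fin N => (ascPochhammer ℂ j).eval (x i + c) with hM
  have key : ∀ i, (x i + c) * zzV (Function.update x i (x i + 1))
      = (x i + c) * zzV x + (M.updateRow i (fun j => (j:ℂ) * M i j)).det := by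
    intro i
    have h1 : zzV (Function.update x i (x i + 1))
        = (M.updateRow i (fun j => (ascPochhammer ℂ j).eval (x i + c + 1))).det := by
      rw [zzV_eq_det c]
      congr 1
      ext a b
      by_cases h : a = i
      · subst h; simp [add_right_comm]
      · simp [h, hM]
    have h2 : (M.updateRow i (fun j => (x i + c) * M i j)).det = (x i + c) * zzV x := by
      have := Matrix.det_updateRow_smul M i (x i + c) (M i)
      rw [Matrix.updateRow_eq_self] at this
      rw [zzV_eq_det c x, ← hM, ← this]; rfl
    rw [h1, ← h2, ← Matrix.det_updateRow_smul, ← Matrix.det_updateRow_add]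
    congr 2
    ext j
    simp only [Pi.smul_apply, smul_eq_mul, Pi.add_apply]
    rw [zz_asc_shift]
    simp only [hM, Matrix.of_apply]; ring
  simp_rw [key]
  rw [Finset.sum_add_distrib, zz_sum_det_updateRow, ← zzV_eq_det, ← Finset.sum_mul]
  ring

theorem zzV_neg {N : ℕ} (x : Fin N → ℂ) :
    zzV (fun i => - x i) = (∏ i : Fin N, ∏ _j ∈ Finset.Ioi i, (-1 : ℂ)) * zzV x := by
  unfold zzV
  rw [Matrix.det_vandermonde, Matrix.det_vandermonde, ← Finset.prod_mul_distrib]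
  refine Finset.prod_congr rfl fun i _ => ?_
  rw [← Finset.prod_mul_distrib]
  refine Finset.prod_congr rfl fun j _ => by ring

theorem zzV_down {N : ℕ} (x : Fin N → ℂ) :
    ∑ i, x i * zzV (Function.update x i (x i - 1))
      = (∑ i, x i - ∑ j : Fin N, (j : ℂ)) * zzV x := by
  have h := zzV_up 0 (fun i => - x i)
  have h1 : ∀ i, Function.update (fun i => - x i) i (- x i + 1)
      = fun k => - (Function.update x i (x i - 1)) k := by
    intro i; ext k
    by_cases hk : k = i
    · subst hk; simp; ring
    · simp [hk]
  simp only [h1, zzV_neg, add_zero] at h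
  set s := (∏ i : Fin N, ∏ _j ∈ Finset.Ioi i, (-1 : ℂ)) with hs
  have hs0 : s ≠ 0 := by
    rw [hs]; exact Finset.prod_ne_zero_iff.2 fun i _ => Finset.prod_ne_zero_iff.2 fun j _ => by simp
  have h2 : s * ∑ i, x i * zzV (Function.update x i (x i - 1))
      = s * ((∑ i, x i - ∑ j : Fin N, (j : ℂ)) * zzV x) := by
    rw [Finset.sum_neg_distrib] at h
    rw [Finset.mul_sum, ← neg_inj, ← Finset.sum_neg_distrib]
    calc _ = ∑ i, -x i * (s * zzV (Function.update x i (x i - 1))) :=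
          Finset.sum_congr rfl fun i _ => by ring
      _ = _ := by rw [h]; ring
  exact mul_left_cancel₀ hs0 h2

theorem zzV_eq_zero {N : ℕ} (x : Fin N → ℂ) (i j : Fin N) (hij : i ≠ j) (h : x i = x j) :
    zzV x = 0 := Matrix.det_vandermonde_eq_zero_iff.2 ⟨i, j, h, hij⟩

/-- Shifted row lengths. -/
def zzL {N : ℕ} (a : Fin N → ℕ) (i : Fin N) : ℕ := a i + (N - 1 - i)

/-- Shifted row lengths, as complex numbers. -/
def zzLc {N : ℕ} (a : Fin N → ℕ) (i : Fin N) : ℂ := (zzL a i : ℂ)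

/-- The row-wise weight. -/
def zzQ {N : ℕ} (z' : ℂ) (a : Fin N → ℕ) : ℂ :=
  ∏ i, ((∏ j ∈ Finset.range (a i), (z' + j - (i : ℕ))) / ((zzL a i).factorial : ℂ))

/-- Antitone sequences of length `N` with sum `n`. -/
def zzA (N n : ℕ) : Finset (Fin N → ℕ) :=
  (Finset.piAntidiag Finset.univ n).filter Antitone

theorem zz_mem_A {N n : ℕ} (a : Fin N → ℕ) : a ∈ zzA N n ↔ ∑ i, a i = n ∧ Antitone a := by
  simp [zzA, Finset.mem_piAntidiag]

theorem zzLc_update {N : ℕ} (b : Fin N → ℕ) (i : Fin N) :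
    zzLc (Function.update b i (b i + 1)) = Function.update (zzLc b) i (zzLc b i + 1) := by
  ext k
  by_cases h : k = i
  · subst h; simp [zzLc, zzL]; ring
  · simp [zzLc, zzL, h]

theorem zzLc_cast {N : ℕ} (b : Fin N → ℕ) (i : Fin N) :
    zzLc b i = (b i : ℂ) + N - 1 - (i : ℕ) := by
  have h : zzL b i + 1 + i = b i + N := by unfold zzL; have := i.2; omega
  have h' : ((zzL b i + 1 + i : ℕ) : ℂ) = ((b i + N : ℕ) : ℂ) := by rw [h]
  push_cast at h'
  unfold zzLc
  linear_combination h'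

theorem zzQ_update {N : ℕ} (z' : ℂ) (b : Fin N → ℕ) (i : Fin N) :
    zzQ z' (Function.update b i (b i + 1)) * (zzLc b i + 1)
      = zzQ z' b * (zzLc b i + (1 + z' - N)) := by
  unfold zzQ
  rw [← Finset.mul_prod_erase _ _ (Finset.mem_univ i),
    ← Finset.mul_prod_erase (f := fun i => (∏ j ∈ Finset.range (b i), (z' + j - (i : ℕ))) /
      ((zzL b i).factorial : ℂ)) _ (Finset.mem_univ i)]
  have h1 : ∏ x ∈ Finset.univ.erase i,
      ((∏ j ∈ Finset.range (Function.update b i (b i + 1) x), (z' + j - (x : ℕ))) /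
        ((zzL (Function.update b i (b i + 1)) x).factorial : ℂ))
      = ∏ x ∈ Finset.univ.erase i, ((∏ j ∈ Finset.range (b x), (z' + j - (x : ℕ))) /
        ((zzL b x).factorial : ℂ)) := by
    refine Finset.prod_congr rfl fun x hx => ?_
    have hx' : x ≠ i := Finset.ne_of_mem_erase hx
    simp [zzL, hx']
  rw [h1]
  have h2 : zzL (Function.update b i (b i + 1)) i = zzL b i + 1 := by
    simp [zzL]; ring
  have h3 : ((zzL b i).factorial : ℂ) ≠ 0 := by exact_mod_cast Nat.factorial_ne_zero _
  have h4 : zzLc b i + 1 ≠ 0 := by unfold zzLc; exact Nat.cast_add_one_ne_zero _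
  rw [h2, Function.update_self, Finset.prod_range_succ, Nat.factorial_succ]
  push_cast
  change _ / ((zzLc b i + 1) * _) * _ * _ = _
  have h5 := zzLc_cast b i
  have h6 : z' + (b i : ℂ) - (i : ℕ) = zzLc b i + (1 + z' - N) := by rw [h5]; ring
  rw [h6]
  field_simp

theorem zz_down_ok {N : ℕ} (a : Fin N → ℕ) (ha : Antitone a) (i : Fin N)
    (h0 : zzLc a i ≠ 0) (hV : zzV (Function.update (zzLc a) i (zzLc a i - 1)) ≠ 0) :
    0 < a i ∧ Antitone (Function.update a i (a i - 1)) := by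
  have key : ∀ q, i < q → a q < a i := by
    intro q hq
    have hi1 : (i : ℕ) + 1 < N := lt_of_le_of_lt (Nat.succ_le_of_lt hq) q.2
    set k : Fin N := ⟨i + 1, hi1⟩ with hk
    have hik : i < k := by rw [Fin.lt_def, hk]; simp
    have hkq : a q ≤ a k := ha (by rw [Fin.le_def, hk]; exact hq)
    refine lt_of_le_of_lt hkq (lt_of_le_of_ne (ha hik.le) fun he => hV ?_)
    refine zzV_eq_zero _ i k hik.ne ?_
    rw [Function.update_self, Function.update_of_ne hik.ne', zzLc_cast, zzLc_cast, he, hk]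
    push_cast; ring
  have hpos : 0 < a i := by
    by_cases hi1 : (i : ℕ) + 1 < N
    · exact lt_of_le_of_lt (Nat.zero_le _) (key ⟨i + 1, hi1⟩ (by rw [Fin.lt_def]; simp))
    · by_contra hc
      apply h0
      unfold zzLc zzL
      have := i.2
      norm_cast
      omega
  refine ⟨hpos, ?_⟩
  intro p q hpq
  rcases eq_or_lt_of_le hpq with rfl | hlt
  · exact le_rfl
  by_cases hp : p = i
  · subst hp
    rw [Function.update_self, Function.update_of_ne hlt.ne']
    have := key q hlt
    omega
  · rw [Function.update_of_ne hp]
    by_cases hq : q = i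
    · subst hq; rw [Function.update_self]; have := ha hpq; omega
    · rw [Function.update_of_ne hq]; exact ha hpq

theorem zz_up_ok {N : ℕ} (b : Fin N → ℕ) (hb : Antitone b) (i : Fin N)
    (hV : zzV (Function.update (zzLc b) i (zzLc b i + 1)) ≠ 0) :
    Antitone (Function.update b i (b i + 1)) := by
  have key : ∀ q, q < i → b i < b q := by
    intro q hq
    have hq' : (q : ℕ) < i := hq
    have hi1 : (i : ℕ) - 1 < N := by have := i.2; omega
    set k : Fin N := ⟨i - 1, hi1⟩ with hk
    have hik : k < i := by rw [Fin.lt_def, hk]; simp; omega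
    have hkq : b k ≤ b q := hb (by rw [Fin.le_def, hk]; simp; omega)
    refine lt_of_lt_of_le (lt_of_le_of_ne (hb hik.le) fun he => hV ?_) hkq
    refine zzV_eq_zero _ i k hik.ne' ?_
    rw [Function.update_self, Function.update_of_ne hik.ne, zzLc_cast, zzLc_cast, he, hk]
    have : ((i : ℕ) : ℂ) = ((i - 1 : ℕ) : ℂ) + 1 := by
      have h9 : (i : ℕ) = (i - 1 : ℕ) + 1 := by omega
      exact_mod_cast congrArg (Nat.cast (R := ℂ)) h9
    rw [this]; ring
  intro p q hpq
  rcases eq_or_lt_of_le hpq with rfl | hlt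
  · exact le_rfl
  by_cases hq : q = i
  · subst hq
    rw [Function.update_self, Function.update_of_ne hlt.ne]
    exact key p hlt
  · rw [Function.update_of_ne hq]
    by_cases hp : p = i
    · subst hp; rw [Function.update_self]; have := hb hpq; omega
    · rw [Function.update_of_ne hp]; exact hb hpq

theorem zz_sum_fin (N : ℕ) : 2 * ∑ j : Fin N, ((j : ℕ) : ℂ) = N * (N - 1) := by
  rw [Fin.sum_univ_eq_sum_range (fun j => (j : ℂ)) N]
  induction N with
  | zero => simp
  | succ n ih => rw [Finset.sum_range_succ, mul_add, ih]; push_cast; ring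

theorem zz_sum_L {N n : ℕ} (a : Fin N → ℕ) (ha : a ∈ zzA N n) :
    ∑ i, zzLc a i = n + ∑ j : Fin N, ((j : ℕ) : ℂ) := by
  have h1 := ((zz_mem_A a).1 ha).1
  have h2 := zz_sum_fin N
  simp_rw [zzLc_cast]
  simp only [Finset.sum_add_distrib, Finset.sum_sub_distrib, Finset.sum_const, Finset.card_univ,
    Fintype.card_fin, nsmul_eq_mul]
  rw [← Nat.cast_sum, h1]
  linear_combination -h2

theorem zz_sum_update {N : ℕ} (b : Fin N → ℕ) (i : Fin N) :
    ∑ k, Function.update b i (b i + 1) k = ∑ k, b k + 1 := by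
  rw [← Finset.add_sum_erase _ _ (Finset.mem_univ i), ← Finset.add_sum_erase _ b (Finset.mem_univ i),
    Function.update_self]
  have : ∑ x ∈ Finset.univ.erase i, Function.update b i (b i + 1) x
      = ∑ x ∈ Finset.univ.erase i, b x :=
    Finset.sum_congr rfl fun x hx => Function.update_of_ne (Finset.ne_of_mem_erase hx) _ _
  rw [this]; ring

theorem zz_update_down {N : ℕ} (a : Fin N → ℕ) (i : Fin N) (h : 0 < a i) :
    Function.update (Function.update a i (a i - 1)) i
      ((Function.update a i (a i - 1)) i + 1) = a := by
  simp [Nat.sub_add_cancel h]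

theorem zz_update_up {N : ℕ} (b : Fin N → ℕ) (i : Fin N) :
    Function.update (Function.update b i (b i + 1)) i
      ((Function.update b i (b i + 1)) i - 1) = b := by
  simp

/-- Key recurrence. -/
theorem zz_recurrence (N n : ℕ) (z' : ℂ) :
    ((n : ℂ) + 1) * ∑ a ∈ zzA N (n + 1), zzV (zzLc a) ^ 2 * zzQ z' a
      = (N * z' + n) * ∑ b ∈ zzA N n, zzV (zzLc b) ^ 2 * zzQ z' b := by
  have hL : ((n : ℂ) + 1) * ∑ a ∈ zzA N (n + 1), zzV (zzLc a) ^ 2 * zzQ z' a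
      = ∑ p ∈ zzA N (n + 1) ×ˢ Finset.univ, zzV (zzLc p.1) * zzQ z' p.1 *
          (zzLc p.1 p.2 * zzV (Function.update (zzLc p.1) p.2 (zzLc p.1 p.2 - 1))) := by
    rw [Finset.sum_product, Finset.mul_sum]
    refine Finset.sum_congr rfl fun a ha => ?_
    simp only []
    rw [← Finset.mul_sum, zzV_down, zz_sum_L a ha]
    push_cast; ring
  have hR : (N * z' + n) * ∑ b ∈ zzA N n, zzV (zzLc b) ^ 2 * zzQ z' b
      = ∑ p ∈ zzA N n ×ˢ Finset.univ, zzV (zzLc p.1) * zzQ z' p.1 *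
          ((zzLc p.1 p.2 + (1 + z' - N)) *
            zzV (Function.update (zzLc p.1) p.2 (zzLc p.1 p.2 + 1))) := by
    rw [Finset.sum_product, Finset.mul_sum]
    refine Finset.sum_congr rfl fun b hb => ?_
    simp only []
    rw [← Finset.mul_sum, zzV_up, Finset.sum_add_distrib, zz_sum_L b hb]
    simp only [Finset.sum_const, Finset.card_univ, Fintype.card_fin, nsmul_eq_mul]
    linear_combination (-(zzV (zzLc b) ^ 2 * zzQ z' b)) * zz_sum_fin N
  have hval : ∀ (b : Fin N → ℕ) (i : Fin N),
      zzV (zzLc (Function.update b i (b i + 1))) * zzQ z' (Function.update b i (b i + 1)) *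
        (zzLc (Function.update b i (b i + 1)) i *
          zzV (Function.update (zzLc (Function.update b i (b i + 1))) i
            (zzLc (Function.update b i (b i + 1)) i - 1)))
      = zzV (zzLc b) * zzQ z' b * ((zzLc b i + (1 + z' - N)) *
            zzV (Function.update (zzLc b) i (zzLc b i + 1))) := by
    intro b i
    rw [zzLc_update, Function.update_self]
    have : Function.update (Function.update (zzLc b) i (zzLc b i + 1)) i (zzLc b i + 1 - 1)
        = zzLc b := by simp
    rw [this]
    linear_combination (zzV (Function.update (zzLc b) i (zzLc b i + 1)) * zzV (zzLc b)) *
      zzQ_update z' b i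
  rw [hL, hR]
  refine Finset.sum_bij_ne_zero (fun p _ _ => (Function.update p.1 p.2 (p.1 p.2 - 1), p.2))
    ?_ ?_ ?_ ?_
  · rintro ⟨a, i⟩ ha h0
    rw [Finset.mem_product] at ha
    obtain ⟨hs, hanti⟩ := (zz_mem_A a).1 ha.1
    have h1 := right_ne_zero_of_mul h0
    obtain ⟨hp, hd⟩ := zz_down_ok a hanti i (left_ne_zero_of_mul h1) (right_ne_zero_of_mul h1)
    rw [Finset.mem_product]
    refine ⟨(zz_mem_A _).2 ⟨?_, hd⟩, Finset.mem_univ _⟩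
    have h2 := zz_sum_update (Function.update a i (a i - 1)) i
    rw [zz_update_down a i hp, hs] at h2
    simp only
    omega
  · rintro ⟨a, i⟩ ha h0 ⟨a', i'⟩ ha' h0' heq
    rw [Finset.mem_product] at ha ha'
    obtain ⟨hs, hanti⟩ := (zz_mem_A a).1 ha.1
    have h1 := right_ne_zero_of_mul h0
    obtain ⟨hp, hd⟩ := zz_down_ok a hanti i (left_ne_zero_of_mul h1) (right_ne_zero_of_mul h1)
    obtain ⟨hs', hanti'⟩ := (zz_mem_A a').1 ha'.1
    have h1' := right_ne_zero_of_mul h0'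
    obtain ⟨hp', hd'⟩ := zz_down_ok a' hanti' i' (left_ne_zero_of_mul h1')
      (right_ne_zero_of_mul h1')
    simp only [Prod.mk.injEq] at heq
    obtain ⟨he, rfl⟩ := heq
    rw [← zz_update_down a i hp, ← zz_update_down a' i hp', he]
  · rintro ⟨b, i⟩ hb h0
    rw [Finset.mem_product] at hb
    obtain ⟨hs, hanti⟩ := (zz_mem_A b).1 hb.1
    have h1 := right_ne_zero_of_mul h0
    have hu := zz_up_ok b hanti i (right_ne_zero_of_mul h1)
    refine ⟨(Function.update b i (b i + 1), i), ?_, ?_, ?_⟩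
    · rw [Finset.mem_product]
      exact ⟨(zz_mem_A _).2 ⟨by rw [zz_sum_update, hs], hu⟩, Finset.mem_univ _⟩
    · simp only
      rw [hval]; exact h0
    · simp only
      rw [zz_update_up]
  · rintro ⟨a, i⟩ ha h0
    rw [Finset.mem_product] at ha
    obtain ⟨hs, hanti⟩ := (zz_mem_A a).1 ha.1
    have h1 := right_ne_zero_of_mul h0
    obtain ⟨hp, hd⟩ := zz_down_ok a hanti i (left_ne_zero_of_mul h1) (right_ne_zero_of_mul h1)
    simp only
    rw [← hval, zz_update_down a i hp]

theorem zz_lt_of_mem {N : ℕ} {Y : YoungDiagram} (hY : Y.colLen 0 ≤ N) {i j : ℕ}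
    (h : (i, j) ∈ Y) : i < N := by
  have h1 := YoungDiagram.mem_iff_lt_colLen.1 h
  have h2 := Y.colLen_anti 0 j (Nat.zero_le _)
  omega

theorem zz_filter_row (Y : YoungDiagram) (i : ℕ) :
    Y.cells.filter (fun c => c.1 = i) = {i} ×ˢ Finset.range (Y.rowLen i) := by
  rw [← YoungDiagram.row_eq_prod]
  ext c
  simp [YoungDiagram.mem_row_iff]

theorem zz_prod_cells {N : ℕ} {Y : YoungDiagram} (hY : Y.colLen 0 ≤ N) (f : ℕ × ℕ → ℂ) :
    ∏ c ∈ Y.cells, f c = ∏ i : Fin N, ∏ j ∈ Finset.range (Y.rowLen i), f ((i : ℕ), j) := by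
  rw [Fin.prod_univ_eq_prod_range (fun i => ∏ j ∈ Finset.range (Y.rowLen i), f (i, j)) N]
  rw [← Finset.prod_fiberwise_of_maps_to (g := Prod.fst) (t := Finset.range N)]
  · refine Finset.prod_congr rfl fun i _ => ?_
    rw [zz_filter_row, Finset.prod_product, Finset.prod_singleton]
  · rintro ⟨i, j⟩ h
    exact Finset.mem_range.2 (zz_lt_of_mem hY ((YoungDiagram.mem_cells _).1 h))

theorem zz_card {N : ℕ} {Y : YoungDiagram} (hY : Y.colLen 0 ≤ N) :
    ∑ i : Fin N, Y.rowLen i = Y.card := by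
  rw [Fin.sum_univ_eq_sum_range (fun i => Y.rowLen i) N]
  unfold YoungDiagram.card
  rw [Finset.card_eq_sum_card_fiberwise (f := Prod.fst) (t := Finset.range N)]
  · refine Finset.sum_congr rfl fun i _ => ?_
    rw [zz_filter_row]; simp
  · rintro ⟨i, j⟩ h
    exact Finset.mem_coe.2
      (Finset.mem_range.2 (zz_lt_of_mem hY ((YoungDiagram.mem_cells _).1 (Finset.mem_coe.1 h))))

/-- The row lengths of `Y` (first `N` of them). -/
def zzRows (N : ℕ) (Y : YoungDiagram) : Fin N → ℕ := fun i => Y.rowLen i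

theorem zz_rows_anti (N : ℕ) (Y : YoungDiagram) : Antitone (zzRows N Y) :=
  fun i j h => Y.rowLen_anti i j h

theorem zz_prod_Icc (n : ℕ) : ∏ x ∈ Finset.Icc 1 n, x = n.factorial := by
  induction n with
  | zero => simp
  | succ n ih => rw [Finset.prod_Icc_succ_top (by omega), ih, Nat.factorial_succ, mul_comm]

theorem zz_hook_row {N : ℕ} {Y : YoungDiagram} (hY : Y.colLen 0 ≤ N) (i : Fin N) :
    (∏ j ∈ Finset.range (Y.rowLen i), hookLen Y ((i : ℕ), j)) *
      ∏ k ∈ Finset.Ioi i, (zzL (zzRows N Y) i - zzL (zzRows N Y) k)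
      = (zzL (zzRows N Y) i).factorial := by
  have hmem : ∀ k j : ℕ, k < Y.colLen j ↔ j < Y.rowLen k := fun k j => by
    rw [← YoungDiagram.mem_iff_lt_colLen, YoungDiagram.mem_iff_lt_rowLen]
  have hc : ∀ j, Y.colLen j ≤ N := fun j => (Y.colLen_anti 0 j (Nat.zero_le _)).trans hY
  have hca : ∀ j j', j ≤ j' → Y.colLen j' ≤ Y.colLen j := fun j j' h => Y.colLen_anti _ _ h
  have hra : ∀ j j', j ≤ j' → Y.rowLen j' ≤ Y.rowLen j := fun j j' h => Y.rowLen_anti _ _ h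
  have hi := i.2
  set h : ℕ → ℕ := fun j => hookLen Y ((i : ℕ), j) with hh
  set d : Fin N → ℕ := fun k => zzL (zzRows N Y) i - zzL (zzRows N Y) k with hd
  have hinj : Set.InjOn h (Finset.range (Y.rowLen i) : Finset ℕ) := by
    intro j hj j' hj' he
    simp only [Finset.coe_range, Set.mem_Iio] at hj hj'
    simp only [hh, hookLen] at he
    have a1 := (hmem i j).2 hj
    have a2 := (hmem i j').2 hj'
    rcases lt_trichotomy j j' with hl | hl | hl
    · have := hca j j' hl.le; omega
    · exact hl
    · have := hca j' j hl.le; omega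
  have dinj : Set.InjOn d (Finset.Ioi i : Finset (Fin N)) := by
    intro k hk k' hk' he
    simp only [Finset.coe_Ioi, Set.mem_Ioi, Fin.lt_def] at hk hk'
    simp only [hd, zzL, zzRows] at he
    have b1 := hra i k hk.le
    have b2 := hra i k' hk'.le
    have b3 := k.2
    have b4 := k'.2
    apply Fin.ext
    rcases lt_trichotomy (k : ℕ) k' with hl | hl | hl
    · have := hra k k' hl.le; omega
    · exact hl
    · have := hra k' k hl.le; omega
  have hdisj : Disjoint ((Finset.range (Y.rowLen i)).image h) ((Finset.Ioi i).image d) := by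
    rw [Finset.disjoint_left]
    intro x hx hx'
    obtain ⟨j, hj, rfl⟩ := Finset.mem_image.1 hx
    obtain ⟨k, hk, he⟩ := Finset.mem_image.1 hx'
    rw [Finset.mem_range] at hj
    rw [Finset.mem_Ioi, Fin.lt_def] at hk
    simp only [hh, hd, zzL, zzRows, hookLen] at he
    have a1 := (hmem i j).2 hj
    have a2 := hmem k j
    have b1 := hra i k hk.le
    have b3 := k.2
    by_cases hkc : (k : ℕ) < Y.colLen j
    · have := a2.1 hkc; omega
    · have : ¬ j < Y.rowLen k := fun hq => hkc (a2.2 hq)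
      omega
  have hU : (Finset.range (Y.rowLen i)).image h ∪ (Finset.Ioi i).image d
      = Finset.Icc 1 (zzL (zzRows N Y) i) := by
    apply Finset.eq_of_subset_of_card_le
    · intro x hx
      rw [Finset.mem_Icc]
      rcases Finset.mem_union.1 hx with hx | hx
      · obtain ⟨j, hj, rfl⟩ := Finset.mem_image.1 hx
        rw [Finset.mem_range] at hj
        have a1 := (hmem i j).2 hj
        have a2 := hc j
        simp only [hh, zzL, zzRows, hookLen]
        omega
      · obtain ⟨k, hk, rfl⟩ := Finset.mem_image.1 hx
        rw [Finset.mem_Ioi, Fin.lt_def] at hk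
        have b1 := hra i k hk.le
        have b3 := k.2
        simp only [hd, zzL, zzRows]
        omega
    · rw [Finset.card_union_of_disjoint hdisj, Finset.card_image_of_injOn hinj,
        Finset.card_image_of_injOn dinj]
      simp [zzL, zzRows]
  rw [← zz_prod_Icc, ← hU, Finset.prod_union hdisj,
    Finset.prod_image hinj, Finset.prod_image dinj]

theorem zz_content_row (s m : ℕ) :
    (s.factorial : ℂ) * ∏ j ∈ Finset.range m, ((s : ℂ) + 1 + j) = ((m + s).factorial : ℂ) := by
  induction m with
  | zero => simp
  | succ m ih =>
    rw [Finset.prod_range_succ, ← mul_assoc, ih, show m + 1 + s = (m + s) + 1 by ring,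
      Nat.factorial_succ]
    push_cast; ring

/-- Normalising constant. -/
def zzK (N : ℕ) : ℂ := ∏ i : Fin N, (1 / ((N - 1 - i : ℕ).factorial : ℂ))

theorem zz_weight_eq {N : ℕ} {Y : YoungDiagram} (hY : Y.colLen 0 ≤ N) (z' : ℂ) :
    zWeight N z' Y = zzK N * (zzV (zzLc (zzRows N Y)) ^ 2 * zzQ z' (zzRows N Y)) := by
  unfold zWeight
  rw [zz_prod_cells hY]
  unfold zzK zzV zzQ
  rw [Matrix.det_vandermonde, ← Finset.prod_pow, ← Finset.prod_mul_distrib,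
    ← Finset.prod_mul_distrib]
  refine Finset.prod_congr rfl fun i _ => ?_
  have h1 := zz_hook_row hY i
  have h2 := zz_content_row (N - 1 - i) (Y.rowLen i)
  set l := zzL (zzRows N Y) i with hl
  have hl' : Y.rowLen i + (N - 1 - i) = l := rfl
  rw [hl'] at h2
  have h3 : (∏ k ∈ Finset.Ioi i, (zzLc (zzRows N Y) k - zzLc (zzRows N Y) i)) ^ 2
      = (∏ k ∈ Finset.Ioi i, ((l - zzL (zzRows N Y) k : ℕ) : ℂ)) ^ 2 := by
    rw [← Finset.prod_pow, ← Finset.prod_pow]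
    refine Finset.prod_congr rfl fun k hk => ?_
    rw [Finset.mem_Ioi, Fin.lt_def] at hk
    have hle : zzL (zzRows N Y) k ≤ l := by
      rw [hl]; unfold zzL zzRows
      have := Y.rowLen_anti i k hk.le
      omega
    rw [Nat.cast_sub hle]
    unfold zzLc
    rw [← hl]; ring
  rw [h3]
  have h4 : ((∏ j ∈ Finset.range (Y.rowLen i), (hookLen Y ((i : ℕ), j) : ℂ))) *
      ∏ k ∈ Finset.Ioi i, ((l - zzL (zzRows N Y) k : ℕ) : ℂ) = (l.factorial : ℂ) := by
    rw [← h1]; push_cast; rfl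
  have h5 : ∏ j ∈ Finset.range (Y.rowLen i),
      (((N : ℂ) + cellContent ((i : ℕ), j)) * (z' + cellContent ((i : ℕ), j)) /
        (hookLen Y ((i : ℕ), j) : ℂ) ^ 2)
      = (∏ j ∈ Finset.range (Y.rowLen i), (((N - 1 - i : ℕ) : ℂ) + 1 + j)) *
        (∏ j ∈ Finset.range (Y.rowLen i), (z' + j - (i : ℕ))) /
        (∏ j ∈ Finset.range (Y.rowLen i), (hookLen Y ((i : ℕ), j) : ℂ)) ^ 2 := by
    rw [← Finset.prod_mul_distrib, ← Finset.prod_pow, ← Finset.prod_div_distrib]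
    refine Finset.prod_congr rfl fun j _ => ?_
    have hi : ((N - 1 - i : ℕ) : ℂ) + 1 + i = N := by
      have h9 : (N - 1 - i : ℕ) + 1 + i = N := by have := i.2; omega
      exact_mod_cast congrArg (Nat.cast (R := ℂ)) h9
    rw [← hi]
    unfold cellContent
    push_cast
    congr 2 <;> ring
  rw [h5]
  change _ = 1 / _ * (_ * ((∏ j ∈ Finset.range (Y.rowLen i), (z' + j - (i : ℕ))) / _))
  set H := ∏ j ∈ Finset.range (Y.rowLen i), (hookLen Y ((i : ℕ), j) : ℂ)
  set D := ∏ k ∈ Finset.Ioi i, ((l - zzL (zzRows N Y) k : ℕ) : ℂ)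
  set Z := ∏ j ∈ Finset.range (Y.rowLen i), (z' + j - (i : ℕ))
  set C := ∏ j ∈ Finset.range (Y.rowLen i), (((N - 1 - i : ℕ) : ℂ) + 1 + j)
  have hlf : (l.factorial : ℂ) ≠ 0 := by exact_mod_cast Nat.factorial_ne_zero _
  have hsf : ((N - 1 - i : ℕ).factorial : ℂ) ≠ 0 := by exact_mod_cast Nat.factorial_ne_zero _
  have hH : H ≠ 0 := by rintro h; rw [h, zero_mul] at h4; exact hlf h4.symm
  have hDne : D ≠ 0 := by rintro h; rw [h, mul_zero] at h4; exact hlf h4.symm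
  have hC : C = H * D / ((N - 1 - i : ℕ).factorial : ℂ) := by
    rw [h4, ← h2]; field_simp
  rw [hC, ← h4]
  field_simp

theorem zz_weight_zero {N : ℕ} {Y : YoungDiagram} (hY : ¬ Y.colLen 0 ≤ N) (z' : ℂ) :
    zWeight N z' Y = 0 := by
  unfold zWeight
  have h : (N, 0) ∈ Y := YoungDiagram.mem_iff_lt_colLen.2 (not_le.1 hY)
  refine Finset.prod_eq_zero ((YoungDiagram.mem_cells _).2 h) ?_
  simp [cellContent]

theorem zz_finite (n : ℕ) : {Y : YoungDiagram | Y.card = n}.Finite := by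
  have hf : Set.Finite {s : Finset (ℕ × ℕ) | s ∈ (Finset.range n ×ˢ Finset.range n).powerset} :=
    Finset.finite_toSet _
  refine Set.Finite.of_finite_image (f := YoungDiagram.cells) (hf.subset ?_) ?_
  · rintro _ ⟨Y, hY, rfl⟩
    simp only [Set.mem_ofPred_eq] at hY
    simp only [Finset.mem_powerset, Set.mem_ofPred_eq]
    rintro ⟨i, j⟩ h
    have h' := (YoungDiagram.mem_cells _).1 h
    have h1 := YoungDiagram.mem_iff_lt_colLen.1 h'
    have h2 := YoungDiagram.mem_iff_lt_rowLen.1 h'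
    rw [YoungDiagram.colLen_eq_card] at h1
    rw [YoungDiagram.rowLen_eq_card] at h2
    have h3 : (Y.col j).card ≤ Y.card := Finset.card_le_card (Finset.filter_subset _ _)
    have h4 : (Y.row i).card ≤ Y.card := Finset.card_le_card (Finset.filter_subset _ _)
    simp only [Finset.mem_product, Finset.mem_range]
    omega
  · intro Y _ Y' _ h
    exact YoungDiagram.ext h

/-- Young diagrams with `n` cells. -/
def zzP (n : ℕ) : Finset YoungDiagram := (zz_finite n).toFinset

theorem zz_mem_P {n : ℕ} (Y : YoungDiagram) : Y ∈ zzP n ↔ Y.card = n := by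
  simp [zzP]

theorem zz_sum_P (N n : ℕ) (z' : ℂ) :
    ∑ Y ∈ zzP n, zWeight N z' Y
      = zzK N * ∑ a ∈ zzA N n, zzV (zzLc a) ^ 2 * zzQ z' a := by
  rw [← Finset.sum_filter_add_sum_filter_not (zzP n) (fun Y => Y.colLen 0 ≤ N)]
  rw [Finset.sum_eq_zero (s := (zzP n).filter fun Y => ¬ Y.colLen 0 ≤ N)
    (fun Y hY => zz_weight_zero (Finset.mem_filter.1 hY).2 z'), add_zero, Finset.mul_sum]
  refine Finset.sum_bij (fun Y _ => zzRows N Y) ?_ ?_ ?_ ?_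
  · intro Y hY
    obtain ⟨h1, h2⟩ := Finset.mem_filter.1 hY
    refine (zz_mem_A _).2 ⟨?_, zz_rows_anti N Y⟩
    rw [← (zz_mem_P Y).1 h1, ← zz_card h2]; rfl
  · intro Y hY Y' hY' he
    obtain ⟨h1, h2⟩ := Finset.mem_filter.1 hY
    obtain ⟨h1', h2'⟩ := Finset.mem_filter.1 hY'
    have hr : ∀ i, i < N → Y.rowLen i = Y'.rowLen i := fun i hi => congrFun he ⟨i, hi⟩
    apply YoungDiagram.ext
    ext ⟨i, j⟩
    rw [YoungDiagram.mem_cells, YoungDiagram.mem_cells]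
    constructor
    · intro h
      have := hr i (zz_lt_of_mem h2 h)
      rw [YoungDiagram.mem_iff_lt_rowLen] at h ⊢; omega
    · intro h
      have := hr i (zz_lt_of_mem h2' h)
      rw [YoungDiagram.mem_iff_lt_rowLen] at h ⊢; omega
  · intro a ha
    obtain ⟨h1, h2⟩ := (zz_mem_A a).1 ha
    set Y := YoungDiagram.ofRowLens (List.ofFn a) h2.sortedGE_ofFn with hYdef
    have hrow : zzRows N Y = a := by
      ext i
      have := YoungDiagram.rowLen_ofRowLens (w := List.ofFn a) (hw := h2.sortedGE_ofFn)
        ⟨i, by simp⟩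
      simpa [zzRows] using this
    have hcol : Y.colLen 0 ≤ N := by
      by_contra hc
      have h := YoungDiagram.mem_iff_lt_colLen.2 (not_le.1 hc)
      rw [hYdef, YoungDiagram.mem_ofRowLens] at h
      obtain ⟨h, _⟩ := h
      simp at h
    refine ⟨Y, Finset.mem_filter.2 ⟨(zz_mem_P Y).2 ?_, hcol⟩, hrow⟩
    rw [← zz_card hcol, ← h1, ← hrow]; rfl
  · intro Y hY
    exact zz_weight_eq (Finset.mem_filter.1 hY).2 z'

theorem zz_P_zero : zzP 0 = {⊥} := by
  ext Y
  rw [zz_mem_P, Finset.mem_singleton]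
  constructor
  · intro h
    apply YoungDiagram.ext
    rw [YoungDiagram.cells_bot]
    exact Finset.card_eq_zero.1 h
  · rintro rfl; simp [YoungDiagram.card]

theorem zz_sum_nat (N n : ℕ) (z' : ℂ) :
    (n.factorial : ℂ) * ∑ Y ∈ zzP n, zWeight N z' Y = (ascPochhammer ℂ n).eval (N * z') := by
  induction n with
  | zero => simp [zz_P_zero, zWeight]
  | succ n ih =>
    rw [ascPochhammer_succ_eval, ← ih, zz_sum_P, zz_sum_P, Nat.factorial_succ]
    have := zz_recurrence N n z'
    push_cast
    linear_combination ((n.factorial : ℂ) * zzK N) * this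

theorem zz_sum (n : ℕ) (z z' : ℂ) :
    (n.factorial : ℂ) * ∑ Y ∈ zzP n, zWeight z z' Y = (ascPochhammer ℂ n).eval (z * z') := by
  open Polynomial in
  set p : ℂ[X] := C (n.factorial : ℂ) * ∑ Y ∈ zzP n, ∏ c ∈ Y.cells,
    ((X + C (cellContent c : ℂ)) * C ((z' + cellContent c) / (hookLen Y c : ℂ) ^ 2)) with hp
  open Polynomial in
  set q : ℂ[X] := (ascPochhammer ℂ n).comp (X * C z') with hq
  have hpe : ∀ t, p.eval t = (n.factorial : ℂ) * ∑ Y ∈ zzP n, zWeight t z' Y := by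
    intro t
    simp [hp, Polynomial.eval_finsetSum, Polynomial.eval_prod, zWeight, mul_div_assoc]
  have hqe : ∀ t, q.eval t = (ascPochhammer ℂ n).eval (t * z') := by
    intro t; simp [hq]; rw [mul_comm]
  have hpq : p = q := by
    apply Polynomial.eq_of_infinite_eval_eq
    refine Set.Infinite.mono ?_ (Set.infinite_range_of_injective (Nat.cast_injective (R := ℂ)))
    rintro _ ⟨N, rfl⟩
    simp only [Set.mem_ofPred_eq]
    rw [hpe, hqe, zz_sum_nat]
  rw [← hpe, ← hqe, hpq]

theorem zz_binomial (w ξ : ℂ) (hξ : ‖ξ‖ < 1) :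
    HasSum (fun n : ℕ => ξ ^ n * ((ascPochhammer ℂ n).eval w / (n.factorial : ℂ)))
      ((1 - ξ) ^ (-w)) := by
  have hmem : ξ ∈ Metric.eball (0 : ℂ) 1 := by
    rw [← ENNReal.ofReal_one, Metric.eball_ofReal]; simpa using hξ
  have h := (Complex.one_div_one_sub_cpow_hasFPowerSeriesOnBall_zero w).hasSum hmem
  rw [zero_add, one_div, ← Complex.cpow_neg] at h
  refine h.congr_fun ?_
  intro n
  rw [FormalMultilinearSeries.ofScalars_apply_eq, smul_eq_mul, mul_comm]
  congr 1
  rw [← Ring.multichoose_eq]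
  have h1 := Ring.factorial_nsmul_multichoose_eq_ascPochhammer w n
  rw [Polynomial.ascPochhammer_smeval_eq_eval, nsmul_eq_mul] at h1
  have h3 : (n.factorial : ℂ) ≠ 0 := by exact_mod_cast Nat.factorial_ne_zero _
  rw [← h1]
  field_simp

theorem zz_sum_level (n : ℕ) (z z' ξ : ℂ) :
    ∑ Y ∈ zzP n, ξ ^ Y.card * zWeight z z' Y
      = ξ ^ n * ((ascPochhammer ℂ n).eval (z * z') / (n.factorial : ℂ)) := by
  have h3 : (n.factorial : ℂ) ≠ 0 := by exact_mod_cast Nat.factorial_ne_zero _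
  rw [← zz_sum n z z', mul_div_cancel_left₀ _ h3, Finset.mul_sum]
  refine Finset.sum_congr rfl fun Y hY => ?_
  rw [(zz_mem_P Y).1 hY]

/-- Exhausting sequence of finite sets of diagrams. -/
def zzB (M : ℕ) : Finset YoungDiagram := (Finset.range M).biUnion zzP

theorem zz_mem_B {M : ℕ} (Y : YoungDiagram) : Y ∈ zzB M ↔ Y.card < M := by
  simp [zzB, zz_mem_P]

theorem zz_sum_B {E : Type*} [AddCommMonoid E] (M : ℕ) (f : YoungDiagram → E) :
    ∑ Y ∈ zzB M, f Y = ∑ n ∈ Finset.range M, ∑ Y ∈ zzP n, f Y := by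
  unfold zzB
  rw [Finset.sum_biUnion]
  intro m _ n _ hmn
  rw [Function.onFun, Finset.disjoint_left]
  intro Y h1 h2
  exact hmn (((zz_mem_P Y).1 h1).symm.trans ((zz_mem_P Y).1 h2))

/-- The positive weight. -/
def zzU (z : ℂ) (Y : YoungDiagram) : ℝ :=
  ∏ c ∈ Y.cells, (‖z + cellContent c‖ / (hookLen Y c : ℝ)) ^ 2

theorem zzU_nonneg (z : ℂ) (Y : YoungDiagram) : 0 ≤ zzU z Y :=
  Finset.prod_nonneg fun _ _ => sq_nonneg _

theorem zzU_cast (z : ℂ) (Y : YoungDiagram) :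
    (zzU z Y : ℂ) = zWeight z ((starRingEnd ℂ) z) Y := by
  unfold zzU zWeight
  push_cast
  refine Finset.prod_congr rfl fun c _ => ?_
  rw [div_pow]
  congr 1
  have : (starRingEnd ℂ) z + (cellContent c : ℂ) = (starRingEnd ℂ) (z + cellContent c) := by simp
  rw [this, Complex.mul_conj, Complex.normSq_eq_norm_sq]
  push_cast; rfl

theorem zz_norm_le (z z' : ℂ) (Y : YoungDiagram) :
    ‖zWeight z z' Y‖ ≤ zzU z Y + zzU z' Y := by
  have h : ‖zWeight z z' Y‖ = (∏ c ∈ Y.cells, (‖z + cellContent c‖ / (hookLen Y c : ℝ))) *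
      ∏ c ∈ Y.cells, (‖z' + cellContent c‖ / (hookLen Y c : ℝ)) := by
    unfold zWeight
    rw [norm_prod, ← Finset.prod_mul_distrib]
    refine Finset.prod_congr rfl fun c _ => ?_
    rw [norm_div, norm_mul, norm_pow, Complex.norm_natCast]
    rw [div_mul_div_comm, sq]
  rw [h]
  unfold zzU
  rw [Finset.prod_pow, Finset.prod_pow]
  set A := ∏ c ∈ Y.cells, (‖z + cellContent c‖ / (hookLen Y c : ℝ))
  set B := ∏ c ∈ Y.cells, (‖z' + cellContent c‖ / (hookLen Y c : ℝ))
  nlinarith [sq_nonneg (A - B), sq_nonneg A, sq_nonneg B]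

theorem zz_summable_U (z : ℂ) (r : ℝ) (hr0 : 0 ≤ r) (hr : r < 1) :
    Summable (fun Y : YoungDiagram => r ^ Y.card * zzU z Y) := by
  have hnn : ∀ Y : YoungDiagram, 0 ≤ r ^ Y.card * zzU z Y :=
    fun Y => mul_nonneg (pow_nonneg hr0 _) (zzU_nonneg z Y)
  set u : ℕ → ℝ := fun n => ∑ Y ∈ zzP n, r ^ Y.card * zzU z Y with hu
  have hun : ∀ n, 0 ≤ u n := fun n => Finset.sum_nonneg fun Y _ => hnn Y
  have hus : Summable u := by
    have hb := (zz_binomial (z * (starRingEnd ℂ) z) (r : ℂ)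
      (by rw [Complex.norm_real, Real.norm_of_nonneg hr0]; exact hr)).summable
    rw [← Complex.summable_ofReal]
    refine hb.congr fun n => ?_
    rw [← zz_sum_level, hu]
    push_cast
    refine Finset.sum_congr rfl fun Y _ => ?_
    rw [zzU_cast]
  refine summable_of_sum_le (c := ∑' n, u n) hnn fun s => ?_
  have hsub : s ⊆ zzB (s.sup YoungDiagram.card + 1) := by
    intro Y hY
    rw [zz_mem_B]
    exact Nat.lt_succ_of_le (Finset.le_sup (f := YoungDiagram.card) hY)
  refine (Finset.sum_le_sum_of_subset_of_nonneg hsub fun Y _ _ => hnn Y).trans ?_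
  rw [zz_sum_B]
  exact hus.sum_le_tsum _ fun n _ => hun n

/-- For all `z, z' ∈ ℂ` and `ξ ∈ ℂ` with `|ξ| < 1`, the series
`Σ_λ ξ^{|λ|} Π_{□∈λ} (z + c(□))(z' + c(□))/h(□)²` over all partitions converges absolutely
and equals `(1 − ξ)^{−zz'}` (principal branch of the complex power). -/
theorem tsum_zMeasure_eq_cpow (z z' ξ : ℂ) (hξ : ‖ξ‖ < 1) :
    Summable (fun Y : YoungDiagram => ‖ξ ^ Y.card * zWeight z z' Y‖) ∧
    ∑' Y : YoungDiagram, ξ ^ Y.card * zWeight z z' Y = (1 - ξ) ^ (-(z * z')) := by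
  have hS : Summable (fun Y : YoungDiagram => ‖ξ ^ Y.card * zWeight z z' Y‖) := by
    refine Summable.of_nonneg_of_le (fun _ => norm_nonneg _) (fun Y => ?_)
      ((zz_summable_U z ‖ξ‖ (norm_nonneg _) hξ).add (zz_summable_U z' ‖ξ‖ (norm_nonneg _) hξ))
    rw [norm_mul, norm_pow, ← mul_add]
    exact mul_le_mul_of_nonneg_left (zz_norm_le z z' Y) (pow_nonneg (norm_nonneg _) _)
  refine ⟨hS, ?_⟩
  have hmono : Filter.Tendsto zzB Filter.atTop Filter.atTop := by
    refine Filter.tendsto_atTop_finset_of_monotone ?_ fun Y => ⟨Y.card + 1, ?_⟩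
    · intro M M' h Y hY
      rw [zz_mem_B] at hY ⊢
      omega
    · rw [zz_mem_B]; omega
  have h1 : Filter.Tendsto (fun M => ∑ Y ∈ zzB M, ξ ^ Y.card * zWeight z z' Y) Filter.atTop
      (nhds (∑' Y : YoungDiagram, ξ ^ Y.card * zWeight z z' Y)) := by
    have h0 := hS.of_norm.hasSum
    unfold HasSum at h0
    simp only [SummationFilter.unconditional_filter] at h0
    exact h0.comp hmono
  have h2 := (zz_binomial (z * z') ξ hξ).tendsto_sum_nat
  refine tendsto_nhds_unique h1 (h2.congr fun M => ?_)
  rw [zz_sum_B]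
  exact Finset.sum_congr rfl fun n _ => (zz_sum_level n z z' ξ).symm

end
end

section
/- Let α, β, z, z' ∈ ℂ with |αβ| < 1, and let i, j ∈ ℤ + 1/2. Then the matrix coefficient ⟨i|j⟩_{α,β,z,z'} satisfies: for i ≤ j, ⟨i|j⟩_{α,β,z,z'} = (α^{j−i}/(j−i)!) (z+i+1/2)_{j−i} · F(−z−i+1/2, −z'−i+1/2; j−i+1; αβ), and for i ≥ j, ⟨i|j⟩_{α,β,z,z'} = (β^{i−j}/(i−j)!) (z'+j+1/2)_{i−j} · F(−z−j+1/2, −z'−j+1/2; i−j+1; αβ), where F(a,b;c;w) = Σ_{k≥0} (a)_k (b)_k / ((c)_k k!) · w^k is the Gauss hypergeometric series. -/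
open scoped Classical

noncomputable section

/-- Rising factorial (Pochhammer symbol) `(a)_s = a(a+1)⋯(a+s−1)`. -/
def riseFac (a : ℂ) (s : ℕ) : ℂ := ∏ t ∈ Finset.range s, (a + t)

/-- Falling factorial `(a)_{↓s} = a(a−1)⋯(a−s+1)`. -/
def fallFac (a : ℂ) (s : ℕ) : ℂ := ∏ t ∈ Finset.range s, (a - t)

/-- The Gauss hypergeometric series `F(a,b;c;w) = Σ_{k≥0} (a)_k (b)_k / ((c)_k k!) · wᵏ`. -/
def gaussHyp (a b c w : ℂ) : ℂ :=
  ∑' k : ℕ, riseFac a k * riseFac b k / (riseFac c k * (k.factorial : ℂ)) * w ^ k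

/-- The matrix coefficient `⟨i|j⟩_{α,β,z,z'}`, i.e. the coefficient of `v_j` in
`e^{αU} e^{βD} v_i` for the `sl(2)`-action `U v_k = (z+k+1/2)v_{k+1}`,
`D v_k = (z'+k−1/2)v_{k−1}` on the module with basis `{v_k}_{k ∈ ℤ+1/2}`.
Half-integers are encoded by integers: `i = a + 1/2`, `j = b + 1/2` with `a, b ∈ ℤ`.
By definition
`⟨i|j⟩ = Σ_{s ≥ max(0,i−j)} (βˢ/s!)(z'+i−1/2)_{↓s} · (α^{j−i+s}/(j−i+s)!)(z+i−s+1/2)_{j−i+s}`,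
the terms with `j − i + s < 0` being absent. -/
def mcoef (α β z z' : ℂ) (a b : ℤ) : ℂ :=
  ∑' s : ℕ, if b - a + (s : ℤ) < 0 then 0 else
    (β ^ s / (s.factorial : ℂ)) * fallFac (z' + ((a : ℂ) + 1/2) - 1/2) s *
      (α ^ (b - a + (s : ℤ)).toNat / ((b - a + (s : ℤ)).toNat.factorial : ℂ)) *
      riseFac (z + ((a : ℂ) + 1/2) - s + 1/2) (b - a + (s : ℤ)).toNat

/-- The dual matrix coefficient `⟨i|j⟩*_{α,β,z,z'}`, i.e. the coefficient of `v*_j` in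
`e^{αU} e^{βD} v*_i` for the dual `sl(2)`-action `U v*_k = −(z+k−1/2)v*_{k−1}`,
`D v*_k = −(z'+k+1/2)v*_{k+1}`.  Half-integers are encoded as `i = a + 1/2`, `j = b + 1/2`.
By definition
`⟨i|j⟩* = Σ_{s ≥ max(0,j−i)} ((−β)ˢ/s!)(z'+i+1/2)_s · ((−α)^{i+s−j}/(i+s−j)!)(z+i+s−1/2)_{↓(i+s−j)}`,
the terms with `i + s − j < 0` being absent. -/
def mcoefStar (α β z z' : ℂ) (a b : ℤ) : ℂ :=
  ∑' s : ℕ, if a - b + (s : ℤ) < 0 then 0 else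
    ((-β) ^ s / (s.factorial : ℂ)) * riseFac (z' + ((a : ℂ) + 1/2) + 1/2) s *
      ((-α) ^ (a - b + (s : ℤ)).toNat / ((a - b + (s : ℤ)).toNat.factorial : ℂ)) *
      fallFac (z + ((a : ℂ) + 1/2) + s - 1/2) (a - b + (s : ℤ)).toNat

lemma riseFac_add (x : ℂ) (m n : ℕ) :
    riseFac x (m + n) = riseFac x m * riseFac (x + m) n := by
  simp only [riseFac, Finset.prod_range_add]
  congr 1
  refine Finset.prod_congr rfl fun t _ => ?_
  push_cast; ring

lemma fallFac_add (x : ℂ) (m n : ℕ) :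
    fallFac x (m + n) = fallFac x m * fallFac (x - m) n := by
  simp only [fallFac, Finset.prod_range_add]
  congr 1
  refine Finset.prod_congr rfl fun t _ => ?_
  push_cast; ring

lemma fallFac_eq_neg (x : ℂ) (n : ℕ) : fallFac x n = (-1) ^ n * riseFac (-x) n := by
  induction n with
  | zero => simp [fallFac, riseFac]
  | succ n ih =>
    have h1 : fallFac x (n + 1) = fallFac x n * (x - n) := by
      simp [fallFac, Finset.prod_range_succ]
    have h2 : riseFac (-x) (n + 1) = riseFac (-x) n * (-x + n) := by
      simp [riseFac, Finset.prod_range_succ]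
    rw [h1, h2, ih]; ring

lemma riseFac_eq_fallFac (x : ℂ) (n : ℕ) : riseFac (x + 1 - n) n = fallFac x n := by
  unfold riseFac fallFac
  rw [← Finset.prod_range_reflect]
  refine Finset.prod_congr rfl fun t ht => ?_
  have ht' : t + 1 ≤ n := Finset.mem_range.mp ht
  have : n - 1 - t = n - (t + 1) := by omega
  rw [this, Nat.cast_sub ht']
  push_cast; ring

lemma factorial_add_riseFac (n s : ℕ) :
    ((n + s).factorial : ℂ) = n.factorial * riseFac ((n : ℂ) + 1) s := by
  induction s with
  | zero => simp [riseFac]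
  | succ s ih =>
    have h2 : riseFac ((n : ℂ) + 1) (s + 1) = riseFac ((n : ℂ) + 1) s * ((n : ℂ) + 1 + s) := by
      simp [riseFac, Finset.prod_range_succ]
    rw [← add_assoc, Nat.factorial_succ, h2, Nat.cast_mul, ih]
    push_cast; ring

lemma riseFac_succ_ne_zero (n s : ℕ) : riseFac ((n : ℂ) + 1) s ≠ 0 := by
  intro h
  have := factorial_add_riseFac n s
  rw [h, mul_zero] at this
  exact Nat.factorial_ne_zero _ (by exact_mod_cast this)

/-- For `|αβ| < 1` and half-integers `i = a + 1/2`, `j = b + 1/2`: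
if `i ≤ j` then `⟨i|j⟩ = (α^{j−i}/(j−i)!)(z+i+1/2)_{j−i} F(−z−i+1/2, −z'−i+1/2; j−i+1; αβ)`,
and if `i ≥ j` then
`⟨i|j⟩ = (β^{i−j}/(i−j)!)(z'+j+1/2)_{i−j} F(−z−j+1/2, −z'−j+1/2; i−j+1; αβ)`. -/
theorem mcoef_eq_gaussHyp (α β z z' : ℂ) (h : ‖α * β‖ < 1) (a b : ℤ) :
    (a ≤ b → mcoef α β z z' a b =
      α ^ (b - a).toNat / ((b - a).toNat.factorial : ℂ) *
        riseFac (z + ((a : ℂ) + 1/2) + 1/2) (b - a).toNat *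
        gaussHyp (-z - ((a : ℂ) + 1/2) + 1/2) (-z' - ((a : ℂ) + 1/2) + 1/2)
          ((((b : ℂ) + 1/2) - ((a : ℂ) + 1/2)) + 1) (α * β)) ∧
    (b ≤ a → mcoef α β z z' a b =
      β ^ (a - b).toNat / ((a - b).toNat.factorial : ℂ) *
        riseFac (z' + ((b : ℂ) + 1/2) + 1/2) (a - b).toNat *
        gaussHyp (-z - ((b : ℂ) + 1/2) + 1/2) (-z' - ((b : ℂ) + 1/2) + 1/2)
          ((((a : ℂ) + 1/2) - ((b : ℂ) + 1/2)) + 1) (α * β)) := by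
  have sq : ∀ s : ℕ, ((-1 : ℂ) ^ s) * (-1) ^ s = 1 := fun s => by
    rw [← mul_pow]; simp
  constructor
  · intro hab
    obtain ⟨n, rfl⟩ := Int.le.dest hab
    have e0 : (a + (n : ℤ) - a).toNat = n := by omega
    rw [e0]
    unfold mcoef gaussHyp
    rw [← tsum_mul_left]
    refine tsum_congr fun s => ?_
    have e1 : (a + (n : ℤ) - a + (s : ℤ)).toNat = s + n := by omega
    rw [if_neg (by omega), e1]
    have c1 : z' + ((a : ℂ) + 1/2) - 1/2 = z' + a := by ring
    have c2 : z + ((a : ℂ) + 1/2) - s + 1/2 = (z + a) + 1 - s := by ring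
    have c3 : -z - ((a : ℂ) + 1/2) + 1/2 = -(z + a) := by ring
    have c4 : -z' - ((a : ℂ) + 1/2) + 1/2 = -(z' + a) := by ring
    have c5 : ((((a + (n : ℤ) : ℤ) : ℂ) + 1/2) - ((a : ℂ) + 1/2)) + 1 = (n : ℂ) + 1 := by
      push_cast; ring
    have c6 : z + ((a : ℂ) + 1/2) + 1/2 = z + a + 1 := by ring
    have c7 : z + (a : ℂ) + 1 - s + s = z + a + 1 := by ring
    rw [c1, c2, c3, c4, c5, c6, riseFac_add, c7, riseFac_eq_fallFac, fallFac_eq_neg,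
      fallFac_eq_neg, add_comm s n, factorial_add_riseFac, mul_pow, pow_add]
    have f1 := riseFac_succ_ne_zero n s
    have f2 : (n.factorial : ℂ) ≠ 0 := by exact_mod_cast n.factorial_ne_zero
    have f3 : (s.factorial : ℂ) ≠ 0 := by exact_mod_cast s.factorial_ne_zero
    generalize riseFac ((n : ℂ) + 1) s = R at *
    field_simp
    linear_combination (α ^ n * β ^ s * α ^ s * riseFac (-(z' + a)) s * riseFac (-(z + a)) s *
      riseFac (z + a + 1) n) * sq s
  · intro hab
    obtain ⟨n, rfl⟩ := Int.le.dest hab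
    have e0 : (b + (n : ℤ) - b).toNat = n := by omega
    rw [e0]
    unfold mcoef gaussHyp
    rw [← tsum_mul_left]
    rw [← (add_right_injective n).tsum_eq]
    · refine tsum_congr fun s => ?_
      have e1 : (b - (b + (n : ℤ)) + ((n + s : ℕ) : ℤ)).toNat = s := by omega
      rw [if_neg (by omega), e1]
      have c1 : z' + (((b + (n : ℤ) : ℤ) : ℂ) + 1/2) - 1/2 = z' + b + n := by push_cast; ring
      have c2 : z + (((b + (n : ℤ) : ℤ) : ℂ) + 1/2) - ((n + s : ℕ) : ℂ) + 1/2
          = (z + b) + 1 - s := by push_cast; ring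
      have c3 : -z - ((b : ℂ) + 1/2) + 1/2 = -(z + b) := by ring
      have c4 : -z' - ((b : ℂ) + 1/2) + 1/2 = -(z' + b) := by ring
      have c5 : ((((b + (n : ℤ) : ℤ) : ℂ) + 1/2) - ((b : ℂ) + 1/2)) + 1 = (n : ℂ) + 1 := by
        push_cast; ring
      have c6 : z' + ((b : ℂ) + 1/2) + 1/2 = z' + b + 1 := by ring
      have c7 : z' + (b : ℂ) + n - n = z' + b := by ring
      have c8 : z' + (b : ℂ) + n + 1 - n = z' + b + 1 := by ring
      rw [c1, c2, c3, c4, c5, c6, fallFac_add, c7, riseFac_eq_fallFac,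
        ← riseFac_eq_fallFac (z' + b + n) n, c8, fallFac_eq_neg,
        fallFac_eq_neg, factorial_add_riseFac, mul_pow, pow_add]
      have f1 := riseFac_succ_ne_zero n s
      have f2 : (n.factorial : ℂ) ≠ 0 := by exact_mod_cast n.factorial_ne_zero
      have f3 : (s.factorial : ℂ) ≠ 0 := by exact_mod_cast s.factorial_ne_zero
      generalize riseFac ((n : ℂ) + 1) s = R at *
      field_simp
      linear_combination (β ^ n * β ^ s * α ^ s * riseFac (-(z' + b)) s * riseFac (-(z + b)) s *
        riseFac (z' + b + 1) n) * sq s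
    · intro s hs
      by_contra hc
      apply hs
      have : s < n := by
        by_contra hlt
        exact hc ⟨s - n, by simp only []; omega⟩
      exact if_pos (by omega)

end
end

section
/- Let α, β, z, z' ∈ ℂ with |αβ| < 1, and let i, j ∈ ℤ + 1/2. Then the dual matrix coefficient ⟨i|j⟩*_{α,β,z,z'} satisfies: for i ≤ j, ⟨i|j⟩*_{α,β,z,z'} = ((−β)^{j−i}/(j−i)!) (z'+i+1/2)_{j−i} · F(z+j+1/2, z'+j+1/2; j−i+1; αβ), and for i ≥ j, ⟨i|j⟩*_{α,β,z,z'} = ((−α)^{i−j}/(i−j)!) (z+j+1/2)_{i−j} · F(z+i+1/2, z'+i+1/2; i−j+1; αβ), where F(a,b;c;w) = Σ_{k≥0} (a)_k (b)_k / ((c)_k k!) · w^k is the Gauss hypergeometric series. -/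
open scoped Classical

noncomputable section

theorem riseFac_add_aux (x : ℂ) (n k : ℕ) :
    riseFac x (n + k) = riseFac x n * riseFac (x + n) k := by
  unfold riseFac
  rw [Finset.prod_range_add]
  congr 1
  apply Finset.prod_congr rfl
  intro t _
  push_cast
  ring

theorem fallFac_eq_aux (x y : ℂ) (n : ℕ) (hxy : x = y + n - 1) :
    fallFac x n = riseFac y n := by
  unfold riseFac fallFac
  rw [← Finset.prod_range_reflect]
  apply Finset.prod_congr rfl
  intro t ht
  have ht' := Finset.mem_range.mp ht
  have h1 : n - 1 - t + (t + 1) = n := by omega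
  have h2 : ((n - 1 - t : ℕ) : ℂ) + ((t : ℂ) + 1) = n := by exact_mod_cast h1
  rw [hxy, ← h2]
  ring

theorem factorial_add_aux (n k : ℕ) :
    ((n + k).factorial : ℂ) = (n.factorial : ℂ) * riseFac ((n : ℂ) + 1) k := by
  induction k with
  | zero => simp [riseFac]
  | succ k ih =>
    rw [← Nat.add_assoc, Nat.factorial_succ]
    push_cast
    rw [ih]
    unfold riseFac
    rw [Finset.prod_range_succ]
    ring

theorem riseFac_ne_zero_aux (n k : ℕ) : riseFac ((n : ℂ) + 1) k ≠ 0 := by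
  intro h0
  have h1 := factorial_add_aux n k
  rw [h0, mul_zero] at h1
  exact Nat.factorial_ne_zero _ (Nat.cast_eq_zero.mp h1)

/-- For `|αβ| < 1` and half-integers `i = a + 1/2`, `j = b + 1/2`:
if `i ≤ j` then
`⟨i|j⟩* = ((−β)^{j−i}/(j−i)!)(z'+i+1/2)_{j−i} F(z+j+1/2, z'+j+1/2; j−i+1; αβ)`,
and if `i ≥ j` then
`⟨i|j⟩* = ((−α)^{i−j}/(i−j)!)(z+j+1/2)_{i−j} F(z+i+1/2, z'+i+1/2; i−j+1; αβ)`. -/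
theorem mcoefStar_eq_gaussHyp (α β z z' : ℂ) (h : ‖α * β‖ < 1) (a b : ℤ) :
    (a ≤ b → mcoefStar α β z z' a b =
      (-β) ^ (b - a).toNat / ((b - a).toNat.factorial : ℂ) *
        riseFac (z' + ((a : ℂ) + 1/2) + 1/2) (b - a).toNat *
        gaussHyp (z + ((b : ℂ) + 1/2) + 1/2) (z' + ((b : ℂ) + 1/2) + 1/2)
          ((((b : ℂ) + 1/2) - ((a : ℂ) + 1/2)) + 1) (α * β)) ∧
    (b ≤ a → mcoefStar α β z z' a b =
      (-α) ^ (a - b).toNat / ((a - b).toNat.factorial : ℂ) *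
        riseFac (z + ((b : ℂ) + 1/2) + 1/2) (a - b).toNat *
        gaussHyp (z + ((a : ℂ) + 1/2) + 1/2) (z' + ((a : ℂ) + 1/2) + 1/2)
          ((((a : ℂ) + 1/2) - ((b : ℂ) + 1/2)) + 1) (α * β)) := by
  constructor
  · intro hab
    obtain ⟨n, rfl⟩ : ∃ n : ℕ, b = a + n := ⟨(b - a).toNat, by omega⟩
    have e1 : (a + (n : ℤ) - a).toNat = n := by omega
    rw [e1]
    unfold mcoefStar gaussHyp
    rw [← tsum_mul_left]
    rw [← (add_right_injective n).tsum_eq (f := fun s : ℕ => if a - (a + (n : ℤ)) + (s : ℤ) < 0 then 0 else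
      ((-β) ^ s / (s.factorial : ℂ)) * riseFac (z' + ((a : ℂ) + 1/2) + 1/2) s *
      ((-α) ^ (a - (a + (n : ℤ)) + (s : ℤ)).toNat / ((a - (a + (n : ℤ)) + (s : ℤ)).toNat.factorial : ℂ)) *
      fallFac (z + ((a : ℂ) + 1/2) + s - 1/2) (a - (a + (n : ℤ)) + (s : ℤ)).toNat)]
    · apply tsum_congr
      intro k
      have e2 : ¬ (a - (a + (n : ℤ)) + ((n + k : ℕ) : ℤ) < 0) := by push_cast; omega
      have e3 : (a - (a + (n : ℤ)) + ((n + k : ℕ) : ℤ)).toNat = k := by push_cast; omega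
      simp only [if_neg e2, e3]
      rw [fallFac_eq_aux _ (z + (((a + (n : ℤ) : ℤ) : ℂ) + 1/2) + 1/2) k (by push_cast; ring),
        riseFac_add_aux, factorial_add_aux]
      have e4 : (((a + (n : ℤ) : ℤ) : ℂ) + 1/2) - ((a : ℂ) + 1/2) + 1 = (n : ℂ) + 1 := by
        push_cast; ring
      have e5 : z' + (((a + (n : ℤ) : ℤ) : ℂ) + 1/2) + 1/2 = z' + ((a : ℂ) + 1/2) + 1/2 + n := by
        push_cast; ring
      rw [e4, e5]
      have f1 := riseFac_ne_zero_aux n k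
      have f2 : (n.factorial : ℂ) ≠ 0 := Nat.cast_ne_zero.mpr (Nat.factorial_ne_zero _)
      have f3 : (k.factorial : ℂ) ≠ 0 := Nat.cast_ne_zero.mpr (Nat.factorial_ne_zero _)
      have e6 : α * β = (-α) * (-β) := by ring
      rw [e6, mul_pow, pow_add]
      generalize -α = A
      generalize -β = B
      field_simp
    · intro s hs
      rw [Function.mem_support] at hs
      have : ¬ (a - (a + (n : ℤ)) + (s : ℤ) < 0) := fun hlt => hs (if_pos hlt)
      exact ⟨s - n, by show n + (s - n) = s; omega⟩
  · intro hab
    obtain ⟨n, rfl⟩ : ∃ n : ℕ, a = b + n := ⟨(a - b).toNat, by omega⟩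
    have e1 : (b + (n : ℤ) - b).toNat = n := by omega
    rw [e1]
    unfold mcoefStar gaussHyp
    rw [← tsum_mul_left]
    apply tsum_congr
    intro k
    have e2 : ¬ (b + (n : ℤ) - b + (k : ℤ) < 0) := by omega
    have e3 : (b + (n : ℤ) - b + (k : ℤ)).toNat = n + k := by omega
    simp only [if_neg e2, e3]
    rw [fallFac_eq_aux _ (z + ((b : ℂ) + 1/2) + 1/2) (n + k) (by push_cast; ring),
      riseFac_add_aux (z + ((b : ℂ) + 1/2) + 1/2), factorial_add_aux]
    have e4 : (((b + (n : ℤ) : ℤ) : ℂ) + 1/2) - ((b : ℂ) + 1/2) + 1 = (n : ℂ) + 1 := by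
      push_cast; ring
    have e5 : z + (((b + (n : ℤ) : ℤ) : ℂ) + 1/2) + 1/2 = z + ((b : ℂ) + 1/2) + 1/2 + n := by
      push_cast; ring
    rw [e4, e5]
    have f1 := riseFac_ne_zero_aux n k
    have f2 : (n.factorial : ℂ) ≠ 0 := Nat.cast_ne_zero.mpr (Nat.factorial_ne_zero _)
    have f3 : (k.factorial : ℂ) ≠ 0 := Nat.cast_ne_zero.mpr (Nat.factorial_ne_zero _)
    have e6 : α * β = (-α) * (-β) := by ring
    rw [e6, mul_pow, pow_add]
    generalize -α = A
    generalize -β = B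
    generalize z' + (((b + (n : ℤ) : ℤ) : ℂ) + 1/2) + 1/2 = Z
    field_simp

end
end
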